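/- Let η_+(t) = h_H(t) · t e^{−t²/2} for some H ≥ 5, let δ ∈ ℝ, and let G_δ be the Mellin transform of η_+(t)e(δt). Let χ be a primitive Dirichlet character mod q, q ≥ 1. Assume all nontrivial zeros ρ of L(s,χ) with |Im(ρ)| ≤ T₀ satisfy Re(ρ) = 1/2, where T₀ ≥ H + max(4π²|δ|, 100). Then, with T₀' = T₀ − H, ∑_{ρ nontrivial, |Im(ρ)| > T₀} |G_δ(ρ)| ≤ (9.462 √T₀' e^{−0.1598 T₀'} + 11.287 |δ| e^{−0.1065 (T₀'/(πδ))²}) · log(qT₀/2π). -/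

import Mathlib

open MeasureTheory Set

/-- `e(t) = e^{2πit}`. -/
noncomputable def e2pi (t : ℝ) : ℂ := Complex.exp (2 * Real.pi * Complex.I * t)

/-- `h(t) = t²(2-t)³ e^{t-1/2}` on `[0,2]`, and `0` elsewhere. -/
noncomputable def hcut (t : ℝ) : ℝ :=
  if t ∈ Set.Icc (0:ℝ) 2 then t^2 * (2 - t)^3 * Real.exp (t - 1/2) else 0

/-- The kernel `F_H(y) = sin(H log y)/(π log y)`. -/
noncomputable def FH (H y : ℝ) : ℝ := Real.sin (H * Real.log y) / (Real.pi * Real.log y)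

/-- `h_H = h ∗_M F_H`, the band-limited approximation to `h`. -/
noncomputable def hH (H t : ℝ) : ℝ := ∫ y in Set.Ioi (0:ℝ), hcut (t / y) * FH H y / y

/-- `η₊(t) = h_H(t) · t e^{-t²/2}`. -/
noncomputable def etaPlus (H t : ℝ) : ℝ := hH H t * (t * Real.exp (-t^2 / 2))

set_option linter.unusedSectionVars false

namespace SGZ
open Complex DirichletCharacter
open scoped ComplexConjugate

variable {q : ℕ} [NeZero q]

lemma dc_inv_apply_conj (χ : DirichletCharacter ℂ q) (a : ZMod q) : χ⁻¹ a = conj (χ a) := by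
  rw [← MulChar.star_apply']
  rfl

lemma LF_conj_of_one_lt (χ : DirichletCharacter ℂ q) {s : ℂ} (hs : 1 < s.re) :
    LFunction χ⁻¹ (conj s) = conj (LFunction χ s) := by
  rw [LFunction_eq_LSeries _ hs, LFunction_eq_LSeries _ (by simpa using hs), LSeries, LSeries,
    conj_tsum]
  refine tsum_congr fun n => ?_
  rcases eq_or_ne n 0 with rfl | hn
  · simp
  · rw [LSeries.term_of_ne_zero hn, LSeries.term_of_ne_zero hn, map_div₀, dc_inv_apply_conj]
    congr 1
    rw [cpow_conj _ _ (by rw [natCast_arg]; exact Real.pi_pos.ne), conj_natCast]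

lemma LF_conj (χ : DirichletCharacter ℂ q) {s : ℂ} (hs : s ≠ 1) :
    LFunction χ⁻¹ (conj s) = conj (LFunction χ s) := by
  have hd : ∀ χ : DirichletCharacter ℂ q, DifferentiableOn ℂ (LFunction χ) {1}ᶜ := fun χ z hz =>
    (differentiableAt_LFunction χ z (.inl hz)).differentiableWithinAt
  have h1 : AnalyticOnNhd ℂ (LFunction χ⁻¹) {1}ᶜ := (hd _).analyticOnNhd isOpen_compl_singleton
  have h2 : AnalyticOnNhd ℂ (fun z => conj (LFunction χ (conj z))) {1}ᶜ := by
    refine DifferentiableOn.analyticOnNhd (fun z hz => ?_) isOpen_compl_singleton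
    have hz' : conj z ≠ 1 := by
      intro h; apply hz
      have := congrArg conj h
      simpa using this
    have := (differentiableAt_LFunction χ (conj z) (.inl hz')).conj_conj
    simp only [conj_conj] at this
    exact this.differentiableWithinAt
  have hc : IsPreconnected ({1}ᶜ : Set ℂ) :=
    (isConnected_compl_singleton_of_one_lt_rank (by simp) 1).isPreconnected
  have h2m : (2:ℂ) ∈ ({1}ᶜ : Set ℂ) := by simp
  have hev : LFunction χ⁻¹ =ᶠ[nhds 2] (fun z => conj (LFunction χ (conj z))) := by
    have : {z : ℂ | 1 < z.re} ∈ nhds (2:ℂ) :=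
      (isOpen_lt continuous_const continuous_re).mem_nhds (by simp)
    filter_upwards [this] with z hz
    have := LF_conj_of_one_lt χ (s := conj z) (by simpa using hz)
    simpa using this
  have := h1.eqOn_of_preconnected_of_eventuallyEq h2 hc h2m hev
  have h3 := this (x := conj s) (by
    simp only [mem_compl_iff, mem_singleton_iff]
    intro h; apply hs
    have := congrArg conj h
    simpa using this)
  simpa using h3


lemma even_inv {χ : DirichletCharacter ℂ q} (h : χ.Even) : χ⁻¹.Even := by
  have : χ (-1) = 1 := h
  show χ⁻¹ (-1) = 1
  rw [dc_inv_apply_conj, this, map_one]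

lemma odd_inv {χ : DirichletCharacter ℂ q} (h : χ.Odd) : χ⁻¹.Odd := by
  have : χ (-1) = -1 := h
  show χ⁻¹ (-1) = -1
  rw [dc_inv_apply_conj, this, map_neg, map_one]

lemma gammaFactor_ne_zero (χ : DirichletCharacter ℂ q) {s : ℂ} (hs : 0 < s.re) :
    gammaFactor χ s ≠ 0 := by
  rcases χ.even_or_odd with h | h
  · rw [h.gammaFactor_def]; exact Gammaℝ_ne_zero_of_re_pos hs
  · rw [h.gammaFactor_def]; exact Gammaℝ_ne_zero_of_re_pos (by simp; linarith)

lemma completed_eq (χ : DirichletCharacter ℂ q) {s : ℂ} (hs : 0 < s.re) :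
    completedLFunction χ s = LFunction χ s * gammaFactor χ s := by
  have h0 : s ≠ 0 := by rintro rfl; simp at hs
  rw [LFunction_eq_completed_div_gammaFactor χ s (.inl h0),
    div_mul_cancel₀ _ (gammaFactor_ne_zero χ hs)]

/-- the zero set in the critical strip is invariant under `ρ ↦ 1 - conj ρ`. -/
lemma zero_symm {χ : DirichletCharacter ℂ q} (hχ : χ.IsPrimitive) {ρ : ℂ}
    (h : LFunction χ ρ = 0) (h0 : 0 < ρ.re) (h1 : ρ.re < 1) : LFunction χ (1 - conj ρ) = 0 := by
  have hne : ρ ≠ 1 := by rintro rfl; simp at h1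
  have e1 : LFunction χ⁻¹ (conj ρ) = 0 := by rw [LF_conj χ hne, h, map_zero]
  have e2 : completedLFunction χ⁻¹ (conj ρ) = 0 := by
    rw [completed_eq _ (by simpa using h0), e1, zero_mul]
  have e3 := hχ.completedLFunction_one_sub (conj ρ)
  rw [e2, mul_zero, completed_eq _ (by simpa using h1)] at e3
  exact (mul_eq_zero.mp e3).resolve_right (gammaFactor_ne_zero _ (by simpa using h1))

lemma Gammaℝ_conj (s : ℂ) : Gammaℝ (conj s) = conj (Gammaℝ s) := by
  rw [Gammaℝ_def, Gammaℝ_def, map_mul, ← Gamma_conj]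
  congr 1
  · rw [show -(conj s)/2 = conj (-s/2) by simp [map_ofNat], cpow_conj _ _ _, conj_ofReal]
    rw [arg_ofReal_of_nonneg Real.pi_pos.le]; exact Real.pi_pos.ne
  · simp [map_ofNat]

lemma gammaFactor_conj (χ : DirichletCharacter ℂ q) (s : ℂ) :
    gammaFactor χ⁻¹ (conj s) = conj (gammaFactor χ s) := by
  rcases χ.even_or_odd with h | h
  · rw [h.gammaFactor_def, (even_inv h).gammaFactor_def, Gammaℝ_conj]
  · rw [h.gammaFactor_def, (odd_inv h).gammaFactor_def, ← Gammaℝ_conj]; simp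

lemma LF_exists_half (χ : DirichletCharacter ℂ q) :
    ∃ t : ℝ, LFunction χ (1/2 + t * I) ≠ 0 := by
  by_contra! hcon
  have hd : DifferentiableOn ℂ (LFunction χ) {1}ᶜ := fun z hz =>
    (differentiableAt_LFunction χ z (.inl hz)).differentiableWithinAt
  have h1 : AnalyticOnNhd ℂ (LFunction χ) {1}ᶜ := hd.analyticOnNhd isOpen_compl_singleton
  have hc : IsPreconnected ({1}ᶜ : Set ℂ) :=
    (isConnected_compl_singleton_of_one_lt_rank (by simp) 1).isPreconnected
  have hhalf : (1/2:ℂ) ∈ ({1}ᶜ : Set ℂ) := by norm_num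
  have hfr : ∃ᶠ z in nhdsWithin (1/2:ℂ) {1/2}ᶜ, LFunction χ z = 0 := by
    have ht : Filter.Tendsto (fun t : ℝ => (1/2 + t * I : ℂ)) (nhdsWithin 0 {0}ᶜ)
        (nhdsWithin (1/2:ℂ) {1/2}ᶜ) := by
      apply tendsto_nhdsWithin_of_tendsto_nhds_of_eventually_within
      · have : Continuous (fun t : ℝ => (1/2 + t * I : ℂ)) := by fun_prop
        have := this.tendsto 0
        simp only [ofReal_zero, zero_mul, add_zero] at this
        exact this.mono_left nhdsWithin_le_nhds
      · filter_upwards [self_mem_nhdsWithin] with t ht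
        simpa using ht
    exact ht.frequently (Filter.Frequently.of_forall fun t => hcon t)
  have := h1.eqOn_zero_of_preconnected_of_frequently_eq_zero hc hhalf hfr (x := 2) (by simp)
  exact LFunction_ne_zero_of_one_le_re χ (s := 2) (.inr (by simp)) (by simp) this

lemma norm_rootNumber {χ : DirichletCharacter ℂ q} (hχ : χ.IsPrimitive) :
    ‖rootNumber χ‖ = 1 := by
  obtain ⟨t, ht⟩ := LF_exists_half χ
  set s : ℂ := 1/2 + t * I with hs
  have hre : s.re = 1/2 := by simp [hs]
  have e3 := hχ.completedLFunction_one_sub (conj s)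
  have e1 : 1 - conj s = s := by
    apply Complex.ext <;> simp [hs]; norm_num
  have hq : (0:ℝ) < q := Nat.cast_pos.mpr (NeZero.pos q)
  have hs1 : s ≠ 1 := by intro h; rw [h] at hre; norm_num at hre
  rw [e1, completed_eq _ (by rw [hre]; norm_num), completed_eq _ (by rw [conj_re, hre]; norm_num),
    LF_conj χ hs1, gammaFactor_conj] at e3
  have e4 := congrArg norm e3
  simp only [norm_mul, norm_conj] at e4
  have e5 : ‖(q:ℂ) ^ (conj s - 1/2)‖ = 1 := by
    rw [norm_natCast_cpow_of_pos (NeZero.pos q)]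
    simp [hre]
  rw [e5, one_mul] at e4
  have h1 : ‖LFunction χ s‖ * ‖gammaFactor χ s‖ ≠ 0 :=
    mul_ne_zero (norm_ne_zero_iff.mpr ht)
      (norm_ne_zero_iff.mpr (gammaFactor_ne_zero χ (by rw [hre]; norm_num)))
  have e6 : 1 * (‖LFunction χ s‖ * ‖gammaFactor χ s‖)
      = ‖rootNumber χ‖ * (‖LFunction χ s‖ * ‖gammaFactor χ s‖) := by rw [one_mul]; exact e4
  exact (mul_right_cancel₀ h1 e6).symm

lemma gamma_ratio (z : ℂ) : ‖Gamma (conj z + 3)‖ ≤ ‖z‖ * ‖z+1‖ * ‖z+2‖ * ‖Gamma z‖ ∨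
    (z = 0 ∨ z + 1 = 0 ∨ z + 2 = 0) := by
  by_cases h : z = 0 ∨ z + 1 = 0 ∨ z + 2 = 0
  · exact .inr h
  left
  push Not at h
  obtain ⟨h0, h1, h2⟩ := h
  have k : Gamma (z + 3) = (z+2)*((z+1)*(z*Gamma z)) := by
    rw [show z + 3 = (z+2)+1 by ring, Gamma_add_one _ h2, show z + 2 = (z+1)+1 by ring,
      Gamma_add_one _ h1, Gamma_add_one _ h0]
  rw [show conj z + 3 = conj (z+3) by simp [map_ofNat], Gamma_conj, norm_conj, k]
  simp only [norm_mul]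
  apply le_of_eq; ring

lemma Gammaℝ_ratio {s : ℂ} {σ : ℝ} (hσ : s.re = σ) (hσ' : |σ| ≤ 5/2) (h2 : |σ + 2| ≤ 5/2)
    (h4 : |σ + 4| ≤ 5/2)
    (hn : σ ≠ 0 ∧ σ ≠ -2 ∧ σ ≠ -4) :
    ‖Gammaℝ (conj s + 6)‖ ≤ (2*Real.pi)⁻¹^3 * (Real.sqrt (s.im^2 + 25/4))^3 * ‖Gammaℝ s‖ := by
  have key := gamma_ratio (s/2)
  have key := key.resolve_right (by
    rintro (h | h | h)
    · apply hn.1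
      have := congrArg re h; simp at this; linarith
    · apply hn.2.1
      have := congrArg re h; simp at this; linarith
    · apply hn.2.2
      have := congrArg re h; simp at this; linarith)
  have nb : ∀ (k : ℝ), |σ + k| ≤ 5/2 → ‖s/2 + (k/2 : ℝ)‖ ≤ Real.sqrt (s.im^2 + 25/4) / 2 := by
    intro k hk
    have e : s/2 + (k/2:ℝ) = (s + k)/2 := by push_cast; ring
    rw [e, norm_div, Complex.norm_two]
    gcongr
    rw [norm_def]
    apply Real.sqrt_le_sqrt
    rw [normSq_apply]
    simp only [add_re, ofReal_re, hσ, add_im, ofReal_im, add_zero]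
    have := sq_le_sq' (neg_le_of_abs_le hk) (le_of_abs_le hk)
    nlinarith
  have n0 := nb 0 (by simpa using hσ')
  have n2 := nb 2 h2
  have n4 := nb 4 h4
  norm_num at n0 n2 n4
  have n0' : ‖s/2‖ ≤ Real.sqrt (s.im^2 + 25/4) / 2 := by simpa using n0
  rw [Gammaℝ_def, Gammaℝ_def, norm_mul, norm_mul, norm_cpow_eq_rpow_re_of_pos Real.pi_pos,
    norm_cpow_eq_rpow_re_of_pos Real.pi_pos]
  have e1 : (conj s + 6)/2 = conj (s/2) + 3 := by simp [map_ofNat]; ring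
  have e2 : (-(conj s + 6)/2).re = (-s/2).re + (-3 : ℝ) := by simp; ring
  rw [e1, e2, Real.rpow_add Real.pi_pos]
  have e3 : Real.pi ^ (-3:ℝ) = (Real.pi⁻¹)^3 := by
    rw [Real.rpow_neg Real.pi_pos.le, inv_pow]; norm_cast
  rw [e3]
  set A := Real.sqrt (s.im^2 + 25/4)
  have hA : 0 ≤ A := Real.sqrt_nonneg _
  have : ‖s/2‖ * ‖s/2+1‖ * ‖s/2+2‖ ≤ (A/2)*(A/2)*(A/2) := by gcongr
  calc Real.pi ^ (-s/2).re * Real.pi⁻¹^3 * ‖Gamma (conj (s/2) + 3)‖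
      ≤ Real.pi ^ (-s/2).re * Real.pi⁻¹^3 * (((A/2)*(A/2)*(A/2)) * ‖Gamma (s/2)‖) := by
        gcongr
        exact key.trans (by gcongr)
    _ = _ := by field_simp

lemma norm_LF_le_tsum (χ : DirichletCharacter ℂ q) {s : ℂ} (hs : 1 < s.re) :
    ‖LFunction χ s‖ ≤ ∑' n : ℕ, 1 / (n:ℝ)^s.re := by
  rw [LFunction_eq_LSeries χ hs, LSeries]
  refine tsum_of_norm_bounded (Real.summable_one_div_nat_rpow.mpr hs).hasSum fun n => ?_
  rcases eq_or_ne n 0 with rfl | hn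
  · simp only [LSeries.term_zero, norm_zero]; positivity
  · rw [LSeries.term_of_ne_zero hn, norm_div, norm_natCast_cpow_of_pos (Nat.pos_of_ne_zero hn)]
    gcongr
    exact DirichletCharacter.norm_le_one χ _

lemma norm_LF_right (χ : DirichletCharacter ℂ q) {s : ℂ} (hs : s.re = 7/2) :
    ‖LFunction χ s‖ ≤ 1.161 := by
  refine (norm_LF_le_tsum χ (by rw [hs]; norm_num)).trans ?_
  rw [hs]
  have h4 := hasSum_zeta_four.mul_left 0.8618
  have h2 := hasSum_zeta_two.mul_left 0.1382
  have hs := h4.add h2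
  have hle : ∑' n : ℕ, 1 / (n:ℝ)^(7/2:ℝ) ≤ 0.8618 * (Real.pi^4/90) + 0.1382 * (Real.pi^2/6) := by
    rw [← hs.tsum_eq]
    refine Summable.tsum_le_tsum (fun n => ?_) (Real.summable_one_div_nat_rpow.mpr (by norm_num))
      hs.summable
    rcases Nat.eq_zero_or_pos n with rfl | hn
    · norm_num
    · have hn' : (1:ℝ) ≤ n := by exact_mod_cast hn
      have hn0 : (0:ℝ) < n := by linarith
      have hsq : Real.sqrt n ≤ 0.8618 + 0.1382 * (n:ℝ)^2 := by
        rw [Real.sqrt_le_left (by positivity)]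
        rcases Nat.eq_or_lt_of_le hn with h | h
        · rw [← h]; norm_num
        · have : (2:ℝ) ≤ n := by exact_mod_cast h
          nlinarith [sq_nonneg ((n:ℝ)^2-4), mul_nonneg (by linarith : (0:ℝ) ≤ n - 2) hn0.le]
      have e : (n:ℝ)^(7/2:ℝ) * Real.sqrt n = (n:ℝ)^4 := by
        rw [Real.sqrt_eq_rpow, ← Real.rpow_add hn0]
        norm_num
      have hs0 : 0 < Real.sqrt n := Real.sqrt_pos.mpr hn0
      have e' : 1/(n:ℝ)^(7/2:ℝ) = Real.sqrt n / (n:ℝ)^4 := by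
        rw [← e]; field_simp
      rw [e']
      calc Real.sqrt n / (n:ℝ)^4 ≤ (0.8618 + 0.1382 * (n:ℝ)^2) / (n:ℝ)^4 := by gcongr
        _ = _ := by field_simp
  refine hle.trans ?_
  have hp := Real.pi_lt_d4
  have h2 : Real.pi^2 ≤ 9.86972 := by nlinarith [Real.pi_pos]
  have h4 : Real.pi^4 ≤ 97.4114 := by nlinarith [Real.pi_pos, sq_nonneg Real.pi]
  linarith

lemma norm_LF_two (χ : DirichletCharacter ℂ q) {s : ℂ} (hs : s.re = 2) :
    6 / Real.pi^2 ≤ ‖LFunction χ s‖ := by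
  have hs1 : 1 < s.re := by rw [hs]; norm_num
  have h := DirichletCharacter.LSeries.mul_mu_eq_one χ hs1
  rw [← LFunction_eq_LSeries χ hs1] at h
  have hb : ‖LSeries ((fun n : ℕ => χ n) * (fun n : ℕ => ((ArithmeticFunction.moebius n : ℤ) : ℂ))) s‖ ≤ Real.pi^2/6 := by
    rw [LSeries]
    refine tsum_of_norm_bounded hasSum_zeta_two fun n => ?_
    rcases eq_or_ne n 0 with rfl | hn
    · simp
    · rw [LSeries.term_of_ne_zero hn, norm_div, norm_natCast_cpow_of_pos (Nat.pos_of_ne_zero hn), hs]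
      have hn2 : (n:ℝ)^(2:ℝ) = (n:ℝ)^2 := by norm_cast
      rw [hn2]
      gcongr
      rw [Pi.mul_apply, norm_mul, norm_intCast]
      have h1 := DirichletCharacter.norm_le_one χ (n : ZMod q)
      have h2 : |((ArithmeticFunction.moebius n : ℤ):ℝ)| ≤ 1 := by
        exact_mod_cast ArithmeticFunction.abs_moebius_le_one
      nlinarith [norm_nonneg (χ n), abs_nonneg ((ArithmeticFunction.moebius n : ℤ):ℝ)]
  have h3 := congrArg norm h
  rw [norm_mul, norm_one] at h3
  have h4 : 1 ≤ ‖LFunction χ s‖ * (Real.pi^2/6) := by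
    rw [← h3]; gcongr
  rw [div_le_iff₀ (by positivity)]
  linarith

lemma norm_LF_left {χ : DirichletCharacter ℂ q} (hχ : χ.IsPrimitive) {s : ℂ} (hs : s.re = -5/2) :
    ‖LFunction χ s‖ ≤ 1.161 * ((q:ℝ)/(2*Real.pi))^3 * (Real.sqrt (s.im^2 + 25/4))^3 := by
  have hq : (0:ℝ) < q := Nat.cast_pos.mpr (NeZero.pos q)
  have h0 : s ≠ 0 := by rintro rfl; norm_num at hs
  have e := hχ.completedLFunction_one_sub (1 - s)
  have hr : (1-s).re = 7/2 := by simp [hs]; norm_num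
  rw [sub_sub_cancel, completed_eq χ⁻¹ (by rw [hr]; norm_num)] at e
  rw [LFunction_eq_completed_div_gammaFactor χ s (.inl h0), e]
  have en : ‖(q:ℂ) ^ (1 - s - 1/2)‖ = (q:ℝ)^3 := by
    rw [norm_natCast_cpow_of_pos (NeZero.pos q)]
    have : (1 - s - 1/2).re = (3:ℕ) := by simp [hs]; norm_num
    rw [this, Real.rpow_natCast]
  have hg : gammaFactor χ s ≠ 0 ∧ ‖gammaFactor χ⁻¹ (1 - s)‖ ≤
      (2*Real.pi)⁻¹^3 * (Real.sqrt (s.im^2 + 25/4))^3 * ‖gammaFactor χ s‖ := by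
    have e1 : (1 - s) = conj s + 6 := by
      apply Complex.ext <;> simp [hs]; norm_num
    rcases χ.even_or_odd with h | h
    · rw [h.gammaFactor_def, (even_inv h).gammaFactor_def]
      constructor
      · rw [Ne, Gammaℝ_eq_zero_iff]
        rintro ⟨n, hn⟩
        have := congrArg re hn
        simp [hs] at this
        have h5 : (5:ℝ) = 4 * n := by linarith
        norm_cast at h5; lia
      · rw [e1]
        exact Gammaℝ_ratio hs (by norm_num [abs_le]) (by norm_num [abs_le]) (by norm_num [abs_le]) (by norm_num)
    · rw [h.gammaFactor_def, (odd_inv h).gammaFactor_def]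
      constructor
      · rw [Ne, Gammaℝ_eq_zero_iff]
        rintro ⟨n, hn⟩
        have := congrArg re hn
        simp [hs] at this
        have h5 : (3:ℝ) = 4 * n := by linarith
        norm_cast at h5; lia
      · rw [e1, show conj s + 6 + 1 = conj (s+1) + 6 by simp; ring]
        have := Gammaℝ_ratio (s := s+1) (σ := -3/2) (by simp [hs]; norm_num) (by norm_num [abs_le]) (by norm_num [abs_le]) (by norm_num [abs_le]) (by norm_num)
        simpa using this
  obtain ⟨hg0, hg⟩ := hg
  have hL := norm_LF_right χ⁻¹ hr
  rw [norm_div, norm_mul, norm_mul, norm_mul, en, norm_rootNumber hχ, mul_one,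
    div_le_iff₀ (norm_pos_iff.mpr hg0)]
  calc (q:ℝ)^3 * (‖LFunction χ⁻¹ (1-s)‖ * ‖gammaFactor χ⁻¹ (1-s)‖)
      ≤ (q:ℝ)^3 * (1.161 * ((2*Real.pi)⁻¹^3 * (Real.sqrt (s.im^2 + 25/4))^3 * ‖gammaFactor χ s‖)) := by
        gcongr
    _ = _ := by field_simp

end SGZ

set_option linter.unusedSectionVars false

namespace SGZ
open Complex DirichletCharacter
open scoped ComplexConjugate

variable {q : ℕ} [NeZero q]

lemma mellin_strip_bound {f : ℝ → ℂ} {a b : ℝ} (ha : MellinConvergent f a)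
    (hb : MellinConvergent f b) :
    ∃ C, ∀ s : ℂ, a ≤ s.re → s.re ≤ b → ‖mellin f s‖ ≤ C := by
  refine ⟨∫ t in Ioi (0:ℝ), (‖(t:ℂ)^((a:ℂ)-1) • f t‖ + ‖(t:ℂ)^((b:ℂ)-1) • f t‖), fun s h1 h2 => ?_⟩
  rw [mellin]
  refine norm_integral_le_of_norm_le (ha.norm.add hb.norm) ?_
  filter_upwards [ae_restrict_mem measurableSet_Ioi] with t ht
  have ht : 0 < t := ht
  simp only [norm_smul, norm_cpow_eq_rpow_re_of_pos ht, sub_re, ofReal_re, one_re]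
  rw [← add_mul]
  gcongr
  rcases le_total 1 t with h | h
  · have := Real.rpow_le_rpow_of_exponent_le h (sub_le_sub_right h2 1)
    linarith [Real.rpow_nonneg ht.le (a-1)]
  · have := Real.rpow_le_rpow_of_exponent_ge ht h (sub_le_sub_right h1 1)
    linarith [Real.rpow_nonneg ht.le (b-1)]

lemma even₀_bound (a : UnitAddCircle) : ∃ C, ∀ s : ℂ, -3 ≤ s.re → s.re ≤ 4 →
    ‖HurwitzZeta.completedHurwitzZetaEven₀ a s‖ ≤ C := by
  have h := (HurwitzZeta.hurwitzEvenFEPair a).isStrongFEPair_toStrongFEPair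
  obtain ⟨C, hC⟩ := mellin_strip_bound (h.hasMellin ((-2:ℝ):ℂ)).1 (h.hasMellin ((2:ℝ):ℂ)).1
  refine ⟨C/2, fun s h1 h2 => ?_⟩
  have := hC (s/2) (by simp; linarith) (by simp; linarith)
  rw [HurwitzZeta.completedHurwitzZetaEven₀, norm_div, Complex.norm_two]
  gcongr
  exact this

lemma odd_bound (a : UnitAddCircle) : ∃ C, ∀ s : ℂ, -3 ≤ s.re → s.re ≤ 4 →
    ‖HurwitzZeta.completedHurwitzZetaOdd a s‖ ≤ C := by
  have h := HurwitzZeta.isStrong_hurwitzOddFEPair a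
  obtain ⟨C, hC⟩ := mellin_strip_bound (h.hasMellin ((-2:ℝ):ℂ)).1 (h.hasMellin ((3:ℝ):ℂ)).1
  refine ⟨C/2, fun s h1 h2 => ?_⟩
  have := hC ((s+1)/2) (by simp; linarith) (by simp; linarith)
  rw [HurwitzZeta.completedHurwitzZetaOdd, h.Λ_eq, norm_div, Complex.norm_two]
  gcongr

lemma npow_bound (s : ℂ) (h1 : -3 ≤ s.re) : ‖(q:ℂ)^(-s)‖ ≤ (q:ℝ)^(3:ℝ) := by
  rw [norm_natCast_cpow_of_pos (NeZero.pos q)]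
  apply Real.rpow_le_rpow_of_exponent_le
  · exact_mod_cast NeZero.pos q
  · simp; linarith

lemma completed_bound (χ : DirichletCharacter ℂ q) : ∃ C, 0 ≤ C ∧ ∀ s : ℂ, -3 ≤ s.re → s.re ≤ 4 →
    1 ≤ |s.im| → ‖completedLFunction χ s‖ ≤ C := by
  choose Ce hCe using even₀_bound
  choose Co hCo using odd_bound
  set Q := (q:ℝ)^(3:ℝ)
  have hQ : 0 ≤ Q := Real.rpow_nonneg (by positivity) _
  set S1 := ∑ j : ZMod q, ‖χ j‖ * Ce (ZMod.toAddCircle j)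
  set S2 := ∑ j : ZMod q, ‖χ j‖ * Co (ZMod.toAddCircle j)
  have hbd : ∀ s : ℂ, -3 ≤ s.re → s.re ≤ 4 → 1 ≤ |s.im| → ‖completedLFunction χ s‖ ≤
     Q * S1 + Q * S2 + Q * ‖χ 0‖ + Q * ‖∑ j, χ j‖ := by
    intro s h1 h2 h3
    have hN := npow_bound (q := q) s h1
    have hs : 1 ≤ ‖s‖ := h3.trans (abs_im_le_norm s)
    have hs' : 1 ≤ ‖1 - s‖ := by
      refine h3.trans ?_
      have := abs_im_le_norm (1 - s)
      simpa using this
    rw [DirichletCharacter.completedLFunction, ZMod.completedLFunction_eq, ZMod.completedLFunction₀]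
    refine (norm_sub_le _ _).trans ?_
    gcongr
    · refine (norm_sub_le _ _).trans ?_
      gcongr
      · refine (norm_add_le _ _).trans ?_
        gcongr
        · rw [norm_mul]
          gcongr
          refine (norm_sum_le _ _).trans ?_
          apply Finset.sum_le_sum
          intro j _
          rw [norm_mul]
          gcongr
          exact hCe _ s h1 h2
        · rw [norm_mul]
          gcongr
          refine (norm_sum_le _ _).trans ?_
          apply Finset.sum_le_sum
          intro j _
          rw [norm_mul]
          gcongr
          exact hCo _ s h1 h2
      · rw [norm_div, norm_mul]
        refine (div_le_self (by positivity) hs).trans ?_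
        gcongr
    · rw [norm_div, norm_mul]
      refine (div_le_self (by positivity) hs').trans ?_
      gcongr
  refine ⟨_, (norm_nonneg _).trans (hbd (2 + I) (by simp; norm_num) (by simp; norm_num) (by simp)), hbd⟩

lemma inv_Gamma_bound : ∃ C, 0 ≤ C ∧ ∀ z : ℂ, -2 ≤ z.re → z.re ≤ 3 → 1 ≤ |z.im| →
    ‖(Gamma z)⁻¹‖ ≤ C * Real.exp (Real.pi * |z.im|) := by
  have hm : ∀ a : ℝ, 0 < a → MellinConvergent (fun x : ℝ => ((Real.exp (-x) : ℝ):ℂ)) a := by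
    intro a ha
    have := Complex.GammaIntegral_convergent (s := a) (by simpa using ha)
    refine this.congr_fun (fun x hx => ?_) measurableSet_Ioi
    simp [mul_comm]
  obtain ⟨C, hC⟩ := mellin_strip_bound (hm 1 one_pos) (hm 6 (by norm_num))
  have hG : ∀ w : ℂ, 1 ≤ w.re → w.re ≤ 6 → ‖Gamma w‖ ≤ C := by
    intro w h1 h2
    rw [Complex.Gamma_eq_integral (by linarith), Complex.GammaIntegral_eq_mellin]
    exact hC w h1 h2
  have hC0 : 0 ≤ C := (norm_nonneg _).trans (hG 1 (by simp) (by simp))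
  refine ⟨C, hC0, fun z h1 h2 h3 => ?_⟩
  have him : ∀ k : ℝ, 1 ≤ ‖(k:ℂ) - z‖ := fun k => by
    refine h3.trans ?_
    have := abs_im_le_norm ((k:ℂ) - z)
    simpa using this
  have n1 := him 1
  have n2 := him 2
  have n3 := him 3
  push_cast at n1 n2 n3
  have hne : ∀ w : ℂ, 1 ≤ ‖w‖ → w ≠ 0 := fun w hw h => by rw [h, norm_zero] at hw; linarith
  have e1 : Gamma (4 - z) = (3-z)*((2-z)*((1-z)*Gamma (1-z))) := by
    rw [show 4 - z = (3-z)+1 by ring, Gamma_add_one _ (hne _ n3), show 3 - z = (2-z)+1 by ring,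
      Gamma_add_one _ (hne _ n2), show 2 - z = (1-z)+1 by ring, Gamma_add_one _ (hne _ n1)]
  have e2 := Complex.Gamma_mul_Gamma_one_sub z
  have hsin : ‖sin (Real.pi * z)‖ ≤ Real.exp (Real.pi * |z.im|) := by
    rw [Complex.sin]
    rw [norm_div, norm_mul, norm_I, mul_one, Complex.norm_two, div_le_iff₀ two_pos]
    refine (norm_sub_le _ _).trans ?_
    rw [Complex.norm_exp, Complex.norm_exp]
    have a1 : (-(Real.pi * z) * I).re ≤ Real.pi * |z.im| := by
      simp
      gcongr
      exact le_abs_self _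
    have a2 : ((Real.pi * z) * I).re ≤ Real.pi * |z.im| := by
      simp
      nlinarith [neg_abs_le z.im, Real.pi_pos]
    have := Real.exp_le_exp.mpr a1
    have := Real.exp_le_exp.mpr a2
    linarith
  by_cases hg0 : Gamma z = 0
  · rw [hg0]; simp; positivity
  have hG1 : Gamma (1-z) = Gamma (4-z) / ((3-z)*((2-z)*(1-z))) := by
    rw [e1]; field_simp [hne _ n1, hne _ n2, hne _ n3]
  have hsin0 : sin (Real.pi * z) ≠ 0 := by
    intro h
    rw [Complex.sin_eq_zero_iff] at h
    obtain ⟨k, hk⟩ := h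
    have hz : z = k := by
      have hp : (Real.pi:ℂ) ≠ 0 := by exact_mod_cast Real.pi_pos.ne'
      rw [mul_comm] at hk
      exact mul_right_cancel₀ hp hk
    rw [hz] at h3; simp at h3; linarith
  have e3 : (Gamma z)⁻¹ = Gamma (1-z) * sin (Real.pi * z) / Real.pi := by
    have hp : (Real.pi:ℂ) ≠ 0 := by exact_mod_cast Real.pi_pos.ne'
    rw [eq_div_iff hsin0] at e2
    rw [eq_div_iff hp, inv_mul_eq_iff_eq_mul₀ hg0, ← mul_assoc, e2]
  have hb1 : ‖Gamma (1-z)‖ ≤ C := by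
    rw [hG1, norm_div, norm_mul, norm_mul]
    have hden : 1 ≤ ‖3-z‖ * (‖2-z‖*‖1-z‖) := by
      have : 1 ≤ ‖2-z‖*‖1-z‖ := one_le_mul_of_one_le_of_one_le n2 n1
      exact one_le_mul_of_one_le_of_one_le n3 this
    refine (div_le_self (norm_nonneg _) hden).trans (hG _ ?_ ?_)
    · simp; linarith
    · simp; linarith
  rw [e3, norm_div, norm_mul, norm_real, Real.norm_eq_abs, abs_of_pos Real.pi_pos]
  refine (div_le_self (by positivity) (by linarith [Real.pi_gt_three])).trans ?_
  gcongr

lemma LF_growth (χ : DirichletCharacter ℂ q) : ∃ C, 0 ≤ C ∧ ∀ s : ℂ, -3 ≤ s.re → s.re ≤ 4 →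
    2 ≤ |s.im| → ‖LFunction χ s‖ ≤ C * Real.exp (Real.pi * |s.im|) := by
  obtain ⟨C1, h10, h1⟩ := completed_bound χ
  obtain ⟨C2, h20, h2⟩ := inv_Gamma_bound
  have hpi := Real.one_le_pi_div_two
  have hR : ∀ s : ℂ, -4 ≤ s.re → s.re ≤ 5 → 2 ≤ |s.im| →
      ‖(Gammaℝ s)⁻¹‖ ≤ Real.pi^(3:ℝ) * (C2 * Real.exp (Real.pi * |s.im|)) := by
    intro s a b c
    rw [Gammaℝ_def, mul_inv, norm_mul, norm_inv, norm_cpow_eq_rpow_re_of_pos Real.pi_pos,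
      ← Real.rpow_neg Real.pi_pos.le]
    have him : (s/2).im = s.im/2 := by simp
    have := h2 (s/2) (by simp; linarith) (by simp; linarith)
      (by rw [him, abs_div, abs_two]; linarith)
    rw [him, abs_div, abs_two] at this
    gcongr
    · linarith [Real.pi_gt_three]
    · simp; linarith
    · refine this.trans ?_
      gcongr
      linarith [abs_nonneg s.im]
  refine ⟨C1 * (Real.pi^(3:ℝ) * C2), by positivity, fun s a b c => ?_⟩
  have h0 : s ≠ 0 := by rintro rfl; norm_num at c
  rw [LFunction_eq_completed_div_gammaFactor χ s (.inl h0), div_eq_mul_inv, norm_mul, mul_assoc,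
    mul_assoc]
  have := h1 s a b (by linarith)
  gcongr
  rcases χ.even_or_odd with h | h
  · rw [h.gammaFactor_def]
    exact hR s (by linarith) (by linarith) c
  · rw [h.gammaFactor_def]
    have := hR (s+1) (by simp; linarith) (by simp; linarith) (by simpa using c)
    simpa using this

end SGZ

set_option linter.unusedSectionVars false

namespace SGZ
open Complex DirichletCharacter
open scoped ComplexConjugate

lemma norm_sin_sq (z : ℂ) : ‖sin z‖^2 = Real.sin z.re^2 + Real.sinh z.im^2 := by
  rw [Complex.sin_eq, ← normSq_eq_norm_sq, normSq_apply]
  have h1 : (sin (z.re:ℂ) * cosh (z.im:ℂ) + cos (z.re:ℂ) * sinh (z.im:ℂ) * I)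
    = ((Real.sin z.re * Real.cosh z.im : ℝ):ℂ) + ((Real.cos z.re * Real.sinh z.im : ℝ):ℂ) * I := by
    push_cast; ring
  rw [h1]
  simp only [add_re, ofReal_re, mul_re, I_re, I_im, ofReal_im, add_im, mul_im]
  have := Real.cosh_sq z.im
  have h2 := Real.sin_sq_add_cos_sq z.re
  ring_nf
  rw [this]
  have h3 : Real.cos z.re^2 = 1 - Real.sin z.re^2 := by linarith
  rw [h3]; ring

/-- numerator of the Blaschke factor -/
noncomputable def bnum (ρ s : ℂ) : ℂ := sin (Real.pi/12 * (s - ρ))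
/-- denominator of the Blaschke factor -/
noncomputable def bden (ρ s : ℂ) : ℂ := sin (Real.pi/12 * (s + 5 + conj ρ))

noncomputable def bl (ρ s : ℂ) : ℝ := ‖bnum ρ s‖ / ‖bden ρ s‖

lemma bnum_sq (ρ s : ℂ) : ‖bnum ρ s‖^2 =
    Real.sin (Real.pi/12 * (s.re - ρ.re))^2 + Real.sinh (Real.pi/12 * (s.im - ρ.im))^2 := by
  rw [bnum, norm_sin_sq]
  have e : ((Real.pi:ℂ)/12) = ((Real.pi/12 : ℝ):ℂ) := by push_cast; ring
  rw [e, re_ofReal_mul, im_ofReal_mul, sub_re, sub_im]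

lemma bden_sq (ρ s : ℂ) : ‖bden ρ s‖^2 =
    Real.sin (Real.pi/12 * (s.re + 5 + ρ.re))^2 + Real.sinh (Real.pi/12 * (s.im - ρ.im))^2 := by
  rw [bden, norm_sin_sq]
  have e : ((Real.pi:ℂ)/12) = ((Real.pi/12 : ℝ):ℂ) := by push_cast; ring
  rw [e, re_ofReal_mul, im_ofReal_mul]
  simp [sub_eq_add_neg]

lemma bden_pos {ρ s : ℂ} (h1 : -5/2 < ρ.re) (h2 : ρ.re < 7/2) (h3 : -5/2 ≤ s.re) (h4 : s.re ≤ 7/2) :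
    0 < ‖bden ρ s‖ := by
  have hp := Real.pi_pos
  have : 0 < ‖bden ρ s‖^2 := by
    rw [bden_sq]
    have : 0 < Real.sin (Real.pi/12 * (s.re + 5 + ρ.re)) := by
      apply Real.sin_pos_of_pos_of_lt_pi
      · have : 0 < s.re + 5 + ρ.re := by linarith
        positivity
      · nlinarith
    positivity
  by_contra h
  have h0 : ‖bden ρ s‖ = 0 := le_antisymm (not_lt.mp h) (norm_nonneg _)
  rw [h0] at this; norm_num at this

lemma bnum_ne {ρ s : ℂ} (hs : s ≠ ρ) (h : |s.re - ρ.re| < 12) : bnum ρ s ≠ 0 := by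
  intro h0
  have hsq := bnum_sq ρ s
  rw [h0, norm_zero] at hsq
  have hp := Real.pi_pos
  have e2 : Real.sinh (Real.pi/12 * (s.im - ρ.im)) = 0 := by
    nlinarith [sq_nonneg (Real.sinh (Real.pi/12 * (s.im - ρ.im))), sq_nonneg (Real.sin (Real.pi/12 * (s.re - ρ.re)))]
  have e1 : Real.sin (Real.pi/12 * (s.re - ρ.re)) = 0 := by
    nlinarith [sq_nonneg (Real.sinh (Real.pi/12 * (s.im - ρ.im))), sq_nonneg (Real.sin (Real.pi/12 * (s.re - ρ.re)))]
  rw [Real.sinh_eq_zero] at e2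
  rw [abs_lt] at h
  rw [Real.sin_eq_zero_iff_of_lt_of_lt (by nlinarith) (by nlinarith)] at e1
  apply hs
  apply Complex.ext
  · have := (mul_eq_zero.mp e1).resolve_left (by positivity); linarith
  · have := (mul_eq_zero.mp e2).resolve_left (by positivity); linarith

lemma bnd_left {ρ s : ℂ} (h : s.re = -5/2 ∨ s.re = 7/2) : ‖bden ρ s‖ = ‖bnum ρ s‖ := by
  have : ‖bden ρ s‖^2 = ‖bnum ρ s‖^2 := by
    rw [bden_sq, bnum_sq]
    rcases h with h | h
    · rw [h, show Real.pi/12 * (-5/2 + 5 + ρ.re) = -(Real.pi/12*(-5/2 - ρ.re)) by ring, Real.sin_neg]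
      ring
    · rw [h, show Real.pi/12 * (7/2 + 5 + ρ.re) = Real.pi - (Real.pi/12*(7/2 - ρ.re)) by ring,
        Real.sin_pi_sub]
  exact (pow_left_inj₀ (norm_nonneg _) (norm_nonneg _) two_ne_zero).mp this

/-- growth condition used in Phragmén–Lindelöf -/
def Gr (f : ℂ → ℂ) : Prop := ∃ B : ℝ, f =O[Filter.comap (abs ∘ im) Filter.atTop ⊓
    Filter.principal (re ⁻¹' Ioo (-5/2) (7/2))] fun z ↦ Real.exp (B * Real.exp ((1/2) * |z.im|))

lemma bratio_bound {ρ s : ℂ} (h : 12 ≤ |s.im - ρ.im|) : ‖bden ρ s‖ ≤ 2 * ‖bnum ρ s‖ := by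
  have hv : 1 ≤ Real.sinh (Real.pi/12 * (s.im - ρ.im))^2 := by
    rw [← sq_abs, Real.abs_sinh, abs_mul, abs_of_pos (by positivity : 0 < Real.pi/12)]
    have h1 : 1 ≤ Real.pi/12 * |s.im - ρ.im| := by nlinarith [Real.pi_gt_three]
    have h2 : Real.pi/12 * |s.im - ρ.im| ≤ Real.sinh (Real.pi/12 * |s.im - ρ.im|) :=
      Real.self_le_sinh_iff.mpr (by linarith)
    nlinarith
  have : ‖bden ρ s‖^2 ≤ (2 * ‖bnum ρ s‖)^2 := by
    rw [mul_pow, bden_sq, bnum_sq]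
    have := Real.sin_sq_le_one (Real.pi/12 * (s.re + 5 + ρ.re))
    nlinarith [sq_nonneg (Real.sin (Real.pi/12 * (s.re - ρ.re)))]
  exact (pow_le_pow_iff_left₀ (norm_nonneg _) (by positivity) two_ne_zero).mp this

lemma blaschke_PL (Z : Finset ℂ) : ∀ (f : ℂ → ℂ) (M : ℝ),
    DifferentiableOn ℂ f (re ⁻¹' Ioo (-4) 5) → Gr f →
    (∀ s : ℂ, s.re = -5/2 → ‖f s‖ ≤ M) → (∀ s : ℂ, s.re = 7/2 → ‖f s‖ ≤ M) →
    (∀ ρ ∈ Z, -5/2 < ρ.re ∧ ρ.re < 7/2 ∧ f ρ = 0) →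
    ∀ c : ℂ, -5/2 ≤ c.re → c.re ≤ 7/2 → ‖f c‖ ≤ M * ∏ ρ ∈ Z, bl ρ c := by
  classical
  have hopen : IsOpen (re ⁻¹' Ioo (-4:ℝ) 5) := isOpen_Ioo.preimage continuous_re
  induction Z using Finset.induction_on with
  | empty =>
    intro f M hf hg ha hb _ c h1 h2
    rw [Finset.prod_empty, mul_one]
    obtain ⟨B, hB⟩ := hg
    refine PhragmenLindelof.vertical_strip (a := -5/2) (b := 7/2) ?_
      ⟨1/2, ?_, B, hB⟩ ha hb h1 h2
    · apply DifferentiableOn.diffContOnCl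
      apply hf.mono
      refine (closure_minimal (t := re ⁻¹' Icc (-5/2:ℝ) (7/2)) (preimage_mono Ioo_subset_Icc_self)
        (isClosed_Icc.preimage continuous_re)).trans ?_
      apply preimage_mono
      intro x hx
      exact ⟨by linarith [hx.1], by linarith [hx.2]⟩
    · rw [lt_div_iff₀ (by norm_num)]
      linarith [Real.pi_gt_three]
  | insert ρ Z hρ ih =>
    intro f M hf hg ha hb hz c h1 h2
    obtain ⟨hρ1, hρ2, hρ0⟩ := hz ρ (Finset.mem_insert_self _ _)
    have hρΩ : (re ⁻¹' Ioo (-4:ℝ) 5) ∈ nhds ρ := hopen.mem_nhds ⟨by linarith, by linarith⟩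
    have hSd : Differentiable ℂ (bnum ρ) := by unfold bnum; fun_prop
    have hTd : Differentiable ℂ (bden ρ) := by unfold bden; fun_prop
    have hS0 : bnum ρ ρ = 0 := by simp [bnum]
    set D := dslope (bnum ρ) ρ with hD
    have hDd : DifferentiableOn ℂ D (re ⁻¹' Ioo (-4:ℝ) 5) :=
      (differentiableOn_dslope hρΩ).mpr hSd.differentiableOn
    have hDne : ∀ s ∈ re ⁻¹' Ioo (-4:ℝ) 5, D s ≠ 0 := by
      intro s hs
      have hs1 : -4 < s.re := hs.1
      have hs2 : s.re < 5 := hs.2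
      rcases eq_or_ne s ρ with rfl | hne
      · rw [hD, dslope_same]
        have : HasDerivAt (bnum s) (Real.pi/12) s := by
          have h1 : HasDerivAt (fun z => (Real.pi/12:ℂ) * (z - s)) (Real.pi/12) s := by
            simpa using ((hasDerivAt_id s).sub_const s).const_mul (Real.pi/12:ℂ)
          have h3 := h1.csin
          simp only [sub_self, mul_zero, Complex.cos_zero, one_mul] at h3
          exact h3
        rw [this.deriv]
        have hp : (Real.pi:ℂ) ≠ 0 := by exact_mod_cast Real.pi_pos.ne'
        exact div_ne_zero hp (by norm_num)
      · rw [hD, dslope_of_ne _ hne, slope_def_field, hS0, sub_zero]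
        refine div_ne_zero (bnum_ne hne ?_) (sub_ne_zero.mpr hne)
        rw [abs_lt]; constructor <;> linarith
    set f1 : ℂ → ℂ := fun s => dslope f ρ s / D s * bden ρ s with hf1
    have hf1eq : ∀ s, s ≠ ρ → f1 s = f s / bnum ρ s * bden ρ s := by
      intro s hs
      have : s - ρ ≠ 0 := sub_ne_zero.mpr hs
      simp only [hf1, hD]
      rw [dslope_of_ne _ hs, dslope_of_ne _ hs, slope_def_field, slope_def_field, hS0, hρ0,
        sub_zero, sub_zero, div_div_div_cancel_right₀ this]
    have hf1d : DifferentiableOn ℂ f1 (re ⁻¹' Ioo (-4:ℝ) 5) :=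
      (((differentiableOn_dslope hρΩ).mpr hf).div hDd hDne).mul hTd.differentiableOn
    have hbd : ∀ s : ℂ, (s.re = -5/2 ∨ s.re = 7/2) → ‖f s‖ ≤ M → ‖f1 s‖ ≤ M := by
      intro s hs hle
      have hne : s ≠ ρ := by
        rintro rfl
        rcases hs with h | h <;> linarith
      have hn0 : bnum ρ s ≠ 0 := bnum_ne hne (by
        rw [abs_lt]; rcases hs with h | h <;> constructor <;> linarith)
      rw [hf1eq s hne, norm_mul, norm_div, bnd_left hs, div_mul_cancel₀ _ (norm_ne_zero_iff.mpr hn0)]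
      exact hle
    have hgr : Gr f1 := by
      obtain ⟨B, hB⟩ := hg
      refine ⟨B, ?_⟩
      have : f1 =O[Filter.comap (abs ∘ im) Filter.atTop ⊓
          Filter.principal (re ⁻¹' Ioo (-5/2) (7/2))] f := by
        apply Asymptotics.IsBigO.of_bound 2
        have hev : ∀ᶠ s : ℂ in Filter.comap (abs ∘ im) Filter.atTop, |ρ.im| + 12 ≤ |s.im| :=
          Filter.tendsto_comap.eventually (Filter.eventually_ge_atTop (|ρ.im| + 12))
        rw [Filter.eventually_inf_principal]
        filter_upwards [hev] with s hs hsr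
        have hsr1 : -5/2 < s.re := hsr.1
        have hsr2 : s.re < 7/2 := hsr.2
        have h12 : 12 ≤ |s.im - ρ.im| := by
          have := abs_sub_abs_le_abs_sub s.im ρ.im
          linarith
        have hne : s ≠ ρ := by rintro rfl; simp at h12; linarith
        have hn0 : bnum ρ s ≠ 0 := bnum_ne hne (by
          rw [abs_lt]; constructor <;> linarith)
        have hn1 := norm_pos_iff.mpr hn0
        rw [hf1eq s hne, norm_mul, norm_div, div_mul_eq_mul_div, div_le_iff₀ hn1]
        have := bratio_bound h12
        nlinarith [norm_nonneg (f s)]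
      exact this.trans hB
    have key := ih f1 M hf1d hgr (fun s hs => hbd s (.inl hs) (ha s hs))
      (fun s hs => hbd s (.inr hs) (hb s hs)) (fun ρ' hρ' => by
        obtain ⟨a1, a2, a3⟩ := hz ρ' (Finset.mem_insert_of_mem hρ')
        refine ⟨a1, a2, ?_⟩
        rw [hf1eq ρ' (fun h => hρ (h ▸ hρ')), a3, zero_div, zero_mul]) c h1 h2
    rw [Finset.prod_insert hρ]
    rcases eq_or_ne c ρ with rfl | hne
    · rw [hρ0, bl, hS0]; simp
    · have hn0 : bnum ρ c ≠ 0 := bnum_ne hne (by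
          rw [abs_lt]; constructor <;> linarith)
      have hd0 := bden_pos hρ1 hρ2 h1 h2
      have hn1 := norm_pos_iff.mpr hn0
      have : ‖f c‖ = ‖f1 c‖ * bl ρ c := by
        rw [hf1eq c hne, norm_mul, norm_div, bl]
        field_simp
      rw [this]
      calc ‖f1 c‖ * bl ρ c ≤ (M * ∏ ρ ∈ Z, bl ρ c) * bl ρ c := by
            apply mul_le_mul_of_nonneg_right key
            rw [bl]; positivity
        _ = _ := by ring

end SGZ

set_option linter.unusedSectionVars false

namespace SGZ
open Complex DirichletCharacter
open scoped ComplexConjugate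

lemma expU {x : ℝ} (h0 : 0 ≤ x) (h1 : x ≤ 1) :
    Real.exp x ≤ 1 + x + x^2/2 + x^3/6 + x^4/24 + x^5/120 + x^6/600 := by
  have := Real.exp_bound' h0 h1 (n := 6) (by norm_num)
  norm_num [Finset.sum_range_succ, Nat.factorial] at this
  have h6 : 0 ≤ x^6 := by positivity
  linarith

lemma expL {x : ℝ} (h0 : 0 ≤ x) :
    1 + x + x^2/2 + x^3/6 + x^4/24 + x^5/120 ≤ Real.exp x := by
  have := Real.sum_le_exp_of_nonneg h0 6
  norm_num [Finset.sum_range_succ, Nat.factorial] at this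
  linarith

lemma cosh_pi4 : Real.cosh (Real.pi/4) ≤ 1.3247 := by
  have hp := Real.pi_lt_d4
  have hp' := Real.pi_gt_d4
  have h1 : Real.cosh (Real.pi/4) ≤ Real.cosh 0.7854 := by
    rw [Real.cosh_le_cosh, abs_of_pos (by positivity), abs_of_pos (by norm_num)]
    linarith
  refine h1.trans ?_
  rw [Real.cosh_eq]
  have a := expU (x := 0.7854) (by norm_num) (by norm_num)
  have b := expL (x := 0.7854) (by norm_num)
  have c : Real.exp (-0.7854) ≤ 1/(1 + 0.7854 + 0.7854^2/2 + 0.7854^3/6 + 0.7854^4/24 + 0.7854^5/120) := by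
    rw [Real.exp_neg, ← one_div]
    gcongr
  norm_num at a c ⊢
  linarith

lemma cos_pi12 {w : ℝ} (h : |w| ≤ Real.pi/12) : 0.9659 ≤ Real.cos w := by
  have hp := Real.pi_lt_d4
  have h1 := Real.one_sub_sq_div_two_le_cos (x := w)
  have h2 : w^2 ≤ (Real.pi/12)^2 := sq_le_sq' (by linarith [neg_abs_le w]) (by linarith [le_abs_self w])
  have : Real.cos (Real.pi/12) ≤ Real.cos w := by
    rw [← Real.cos_abs w]
    exact Real.cos_le_cos_of_nonneg_of_le_pi (abs_nonneg _) (by linarith [Real.pi_pos]) h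
  have h3 : Real.cos (Real.pi/12)^2 = (1 + Real.sqrt 3/2)/2 := by
    have := Real.cos_sq (Real.pi/12)
    rw [this, show 2*(Real.pi/12) = Real.pi/6 by ring, Real.cos_pi_div_six]; ring
  have h4 : 1.732 ≤ Real.sqrt 3 := by
    apply Real.le_sqrt_of_sq_le; norm_num
  have h5 : 0 ≤ Real.cos (Real.pi/12) := Real.cos_nonneg_of_mem_Icc ⟨by linarith [Real.pi_pos], by linarith [Real.pi_pos]⟩
  nlinarith

lemma pair_alg {C m : ℝ} (hC1 : 1 ≤ C) (hC2 : C ≤ 1.3247) (hm1 : 0.9659 ≤ m) (hm2 : m ≤ 1) :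
    (C^2 + m^2 - 1/2) - C * (Real.sqrt 2 * m) ≤ 0.095 * ((C^2 + m^2 - 1/2) + C * (Real.sqrt 2 * m)) := by
  have hs : 1.41421 ≤ Real.sqrt 2 := by
    apply Real.le_sqrt_of_sq_le; norm_num
  have : C^2 + m^2 - 1/2 ≤ 1.2099 * 1.41421 * C * m := by
    nlinarith [mul_nonneg (sub_nonneg.mpr hC1) (sub_nonneg.mpr hC2), mul_nonneg (sub_nonneg.mpr hm1) (sub_nonneg.mpr hm2), mul_nonneg (sub_nonneg.mpr hC1) (sub_nonneg.mpr hm1), mul_nonneg (sub_nonneg.mpr hC1) (sub_nonneg.mpr hm2), mul_nonneg (sub_nonneg.mpr hC2) (sub_nonneg.mpr hm1), mul_nonneg (sub_nonneg.mpr hC2) (sub_nonneg.mpr hm2)]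
  have h2 : 1.2099 * 1.41421 * C * m ≤ 1.2099 * (C * (Real.sqrt 2 * m)) := by
    have : 0 ≤ C * m := by positivity
    nlinarith
  nlinarith

lemma bl_pair {ρ : ℂ} {T : ℝ} (h0 : 0 < ρ.re) (h1 : ρ.re < 1) (hT : |ρ.im - T| ≤ 3/2) :
    (bl ρ (2 + T * I))^2 * (bl (1 - conj ρ) (2 + T * I))^2 ≤ 0.095 := by
  have hp := Real.pi_pos
  set c : ℂ := 2 + T * I with hc
  have hcr : c.re = 2 := by simp [hc]
  have hci : c.im = T := by simp [hc]
  set v := Real.pi/12 * (T - ρ.im) with hv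
  set a := Real.pi/12 * (2 - ρ.re) with ha
  set b := Real.pi/12 * (1 + ρ.re) with hb
  set C := Real.cosh (2*v) with hCdef
  have n1 : ‖bnum ρ c‖^2 = (C - Real.cos (2*a))/2 := by
    rw [bnum_sq, hcr, hci, hCdef, Real.cosh_two_mul, Real.cos_two_mul, Real.cos_sq', Real.cosh_sq]; ring
  have d1 : ‖bden ρ c‖^2 = (C + Real.cos (2*b))/2 := by
    rw [bden_sq, hcr, hci, show Real.pi/12 * (2 + 5 + ρ.re) = b + Real.pi/2 by rw [hb]; ring,
      Real.sin_add_pi_div_two, hCdef, Real.cosh_two_mul, Real.cos_two_mul, Real.cosh_sq]; ring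
  have n2 : ‖bnum (1 - conj ρ) c‖^2 = (C - Real.cos (2*b))/2 := by
    have e1 : (1 - conj ρ).re = 1 - ρ.re := by simp
    have e2 : (1 - conj ρ).im = ρ.im := by simp
    rw [bnum_sq, hcr, hci, e1, e2, show Real.pi/12 * (2 - (1 - ρ.re)) = b by rw [hb]; ring,
      hCdef, Real.cosh_two_mul, Real.cos_two_mul, Real.cos_sq', Real.cosh_sq]; ring
  have d2 : ‖bden (1 - conj ρ) c‖^2 = (C + Real.cos (2*a))/2 := by
    have e1 : (1 - conj ρ).re = 1 - ρ.re := by simp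
    have e2 : (1 - conj ρ).im = ρ.im := by simp
    rw [bden_sq, hcr, hci, e1, e2, show Real.pi/12 * (2 + 5 + (1 - ρ.re)) = a + Real.pi/2 by rw [ha]; ring,
      Real.sin_add_pi_div_two, hCdef, Real.cosh_two_mul, Real.cos_two_mul, Real.cosh_sq]; ring
  set w := a - b with hw
  have hab : a + b = Real.pi/4 := by rw [ha, hb]; ring
  have hs : Real.cos (2*a) + Real.cos (2*b) = Real.sqrt 2 * Real.cos w := by
    rw [Real.cos_add_cos, show (2*a+2*b)/2 = Real.pi/4 by linarith, show (2*a-2*b)/2 = w by rw [hw]; ring,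
      Real.cos_pi_div_four]; ring
  have hm : Real.cos (2*a) * Real.cos (2*b) = Real.cos w^2 - 1/2 := by
    have h1 : Real.cos (2*a + 2*b) = 0 := by rw [show 2*a+2*b = Real.pi/2 by linarith, Real.cos_pi_div_two]
    have h2 : Real.cos (2*a - 2*b) = 2 * Real.cos w^2 - 1 := by
      rw [← Real.cos_two_mul, hw]; ring_nf
    rw [Real.cos_add] at h1; rw [Real.cos_sub] at h2
    linarith
  have hwb : |w| ≤ Real.pi/12 := by
    rw [hw, ha, hb, abs_le]; constructor <;> nlinarith
  have hC1 : 1 ≤ C := Real.one_le_cosh _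
  have hC2 : C ≤ 1.3247 := by
    refine le_trans ?_ cosh_pi4
    rw [hCdef, Real.cosh_le_cosh, abs_of_pos (by positivity : 0 < Real.pi/4), hv, abs_mul, abs_mul,
      abs_of_pos (by positivity : 0 < Real.pi/12), abs_two, abs_sub_comm]
    nlinarith
  have key := pair_alg hC1 hC2 (cos_pi12 hwb) (Real.cos_le_one w)
  rw [bl, bl, div_pow, div_pow, n1, n2, d1, d2, div_mul_div_comm]
  have hcos1 : -1 ≤ Real.cos (2*a) := Real.neg_one_le_cos _
  have hpos : 0 < (C + Real.cos (2*b))/2 * ((C + Real.cos (2*a))/2) := by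
    have : 0 < C^2 + Real.cos w^2 - 1/2 + C * (Real.sqrt 2 * Real.cos w) := by
      have := cos_pi12 hwb
      have : 0 ≤ C * (Real.sqrt 2 * Real.cos w) := by positivity
      nlinarith
    nlinarith
  rw [div_le_iff₀ hpos]
  nlinarith

end SGZ

set_option linter.unusedSectionVars false

namespace SGZ
open Complex DirichletCharacter
open scoped ComplexConjugate

variable {q : ℕ} [NeZero q]

lemma exists_entire (χ : DirichletCharacter ℂ q) : ∃ g : ℂ → ℂ, Differentiable ℂ g ∧
    ∀ s, s ≠ 1 → g s = (s - 1) * LFunction χ s := by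
  by_cases h : χ = 1
  · subst h
    refine ⟨LFunctionTrivChar₁ q, differentiable_LFunctionTrivChar₁ q, fun s hs => ?_⟩
    rw [LFunctionTrivChar₁, Function.update_of_ne hs]
  · exact ⟨fun s => (s-1) * LFunction χ s, by have := differentiable_LFunction h; fun_prop, fun s _ => rfl⟩

/-- the auxiliary function -/
noncomputable def aux (g : ℂ → ℂ) (D T : ℝ) (s : ℂ) : ℂ :=
  g s / (s - 6) * exp ((s - 7/2) / 2 * (Real.log D : ℂ)) * exp (0.0043 * (s - T * I + 1/2)^2)

lemma norm_e1 (D : ℝ) (s : ℂ) : ‖exp ((s - 7/2) / 2 * (Real.log D : ℂ))‖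
    = Real.exp ((s.re - 7/2)/2 * Real.log D) := by
  rw [Complex.norm_exp, re_mul_ofReal]
  congr 2
  simp

lemma norm_e2 (T : ℝ) (s : ℂ) : ‖exp (0.0043 * (s - T * I + 1/2)^2)‖
    = Real.exp (0.0043 * ((s.re+1/2)^2 - (s.im - T)^2)) := by
  rw [Complex.norm_exp]
  congr 1
  have : (0.0043 : ℂ) = ((0.0043:ℝ):ℂ) := by push_cast; rfl
  rw [this, re_ofReal_mul]
  congr 1
  rw [pow_two, mul_re]
  simp
  ring

lemma norm_frac (s : ℂ) (h : s.re ≤ 7/2) : ‖s - 1‖ ≤ ‖s - 6‖ := by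
  rw [Complex.norm_def, Complex.norm_def]
  apply Real.sqrt_le_sqrt
  rw [normSq_apply, normSq_apply]
  simp
  nlinarith

lemma aux_growth (χ : DirichletCharacter ℂ q) {g : ℂ → ℂ} 
    (hge : ∀ s, s ≠ 1 → g s = (s - 1) * LFunction χ s) (D T : ℝ) : Gr (aux g D T) := by
  obtain ⟨C, hC0, hC⟩ := LF_growth χ
  refine ⟨2 * Real.pi, ?_⟩
  apply Asymptotics.IsBigO.of_bound (C * (Real.exp (3 * |Real.log D|) * Real.exp (0.0043 * 16)))
  have hev : ∀ᶠ s : ℂ in Filter.comap (abs ∘ im) Filter.atTop, 2 ≤ |s.im| :=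
    Filter.tendsto_comap.eventually (Filter.eventually_ge_atTop 2)
  rw [Filter.eventually_inf_principal]
  filter_upwards [hev] with s hs hsr
  have hsr1 : -5/2 < s.re := hsr.1
  have hsr2 : s.re < 7/2 := hsr.2
  have hs1 : s ≠ 1 := by rintro rfl; norm_num at hs
  have hs6 : 0 < ‖s - 6‖ := by
    rw [norm_pos_iff, sub_ne_zero]; rintro rfl; norm_num at hsr2
  have h1 : ‖g s / (s - 6)‖ ≤ ‖LFunction χ s‖ := by
    rw [hge s hs1, norm_div, norm_mul, div_le_iff₀ hs6, mul_comm]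
    gcongr
    exact norm_frac s hsr2.le
  rw [aux, norm_mul, norm_mul, norm_e1, norm_e2]
  have h2 : Real.exp ((s.re - 7/2)/2 * Real.log D) ≤ Real.exp (3 * |Real.log D|) := by
    apply Real.exp_le_exp.mpr
    have : (s.re - 7/2)/2 * Real.log D ≤ |(s.re - 7/2)/2| * |Real.log D| := by
      rw [← abs_mul]; exact le_abs_self _
    refine this.trans ?_
    gcongr
    rw [abs_le]; constructor <;> linarith
  have h3 : Real.exp (0.0043 * ((s.re+1/2)^2 - (s.im - T)^2)) ≤ Real.exp (0.0043 * 16) := by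
    apply Real.exp_le_exp.mpr
    have : (s.re+1/2)^2 ≤ 4^2 := sq_le_sq' (by linarith) (by linarith)
    nlinarith [sq_nonneg (s.im - T)]
  have h4 : ‖LFunction χ s‖ ≤ C * Real.exp (2 * Real.pi * Real.exp (1/2*|s.im|)) := by
    refine (hC s (by linarith) (by linarith) hs).trans ?_
    have := Real.add_one_le_exp (1/2*|s.im|)
    apply mul_le_mul_of_nonneg_left _ hC0
    apply Real.exp_le_exp.mpr
    nlinarith [Real.pi_pos]
  rw [Real.norm_eq_abs, abs_of_pos (Real.exp_pos _)]
  calc ‖g s / (s - 6)‖ * Real.exp ((s.re - 7/2)/2 * Real.log D) * Real.exp (0.0043 * ((s.re+1/2)^2 - (s.im - T)^2))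
      ≤ (C * Real.exp (2 * Real.pi * Real.exp (1/2*|s.im|))) * Real.exp (3 * |Real.log D|) * Real.exp (0.0043 * 16) := by
        gcongr
        exact h1.trans h4
    _ = _ := by ring

lemma loc_ineq {x T : ℝ} (hT : 105 ≤ |T|) :
    (Real.sqrt ((T+x)^2 + 25/4) / |T|)^3 ≤ Real.exp (0.0043 * (12 + x^2)) := by
  have hT0 : 0 < |T| := by linarith
  have hT2 : |T|^2 = T^2 := sq_abs T
  have hT2' : 105^2 ≤ T^2 := by rw [← hT2]; gcongr
  have hTn : T ≠ 0 := by rintro rfl; norm_num at hT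
  set y := 2 * x / T + (x^2 + 25/4) / T^2 with hy
  have e1 : (Real.sqrt ((T+x)^2 + 25/4) / |T|)^2 = 1 + y := by
    rw [div_pow, Real.sq_sqrt (by positivity), hT2, hy]
    field_simp
    ring
  have hxT : x / T ≤ |x| / 105 := by
    refine (le_abs_self _).trans ?_
    rw [abs_div]
    gcongr
  have hx2 : (x^2 + 25/4) / T^2 ≤ (x^2+25/4) / 105^2 := by gcongr
  have hy1 : 3/2 * y ≤ 0.0043 * (12 + x^2) := by
    have : y ≤ 2 * (|x|/105) + (x^2+25/4)/105^2 := by rw [hy, mul_div_assoc]; linarith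
    have hx : x^2 = |x|^2 := (sq_abs x).symm
    rw [hx] at this ⊢
    nlinarith [sq_nonneg (|x| - 3.43)]
  have e2 : Real.sqrt ((T+x)^2 + 25/4) / |T| ≤ Real.exp (y/2) := by
    have : (Real.sqrt ((T+x)^2 + 25/4) / |T|)^2 ≤ (Real.exp (y/2))^2 := by
      rw [e1, ← Real.exp_nat_mul]
      have := Real.add_one_le_exp y
      calc 1 + y ≤ Real.exp y := by linarith
        _ = _ := by congr 1; push_cast; ring
    exact (pow_le_pow_iff_left₀ (by positivity) (by positivity) two_ne_zero).mp this
  calc (Real.sqrt ((T+x)^2 + 25/4) / |T|)^3 ≤ (Real.exp (y/2))^3 := by gcongr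
    _ = Real.exp (3/2*y) := by rw [← Real.exp_nat_mul]; congr 1; push_cast; ring
    _ ≤ _ := Real.exp_le_exp.mpr hy1

/-- The basic zero counting bound. -/
lemma count_bound {χ : DirichletCharacter ℂ q} (hχ : χ.IsPrimitive) {T : ℝ} (hT : 105 ≤ |T|)
    (Z : Finset ℂ) (hZ : ∀ ρ ∈ Z, LFunction χ ρ = 0 ∧ 0 < ρ.re ∧ ρ.re < 1 ∧ |ρ.im - T| ≤ 3/2)
    (hsym : ∀ ρ ∈ Z, 1 - conj ρ ∈ Z) :
    0.588 * (Z.card : ℝ) ≤ 0.75 * Real.log (q * |T| / (2 * Real.pi)) + 0.7 := by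
  have hp := Real.pi_pos
  obtain ⟨g, hgd, hge⟩ := exists_entire χ
  have hq : (0:ℝ) < q := Nat.cast_pos.mpr (NeZero.pos q)
  have hT0 : 0 < |T| := by linarith
  set D := (q * |T| / (2 * Real.pi)) with hD
  have hD0 : 0 < D := by positivity
  set f := aux g D T with hf
  set M := 1.161 * Real.exp (0.0043 * 16) with hM
  have hfd : DifferentiableOn ℂ f (re ⁻¹' Ioo (-4) 5) := by
    intro s hs
    have hs2 : s.re < 5 := hs.2
    have hs6 : s - 6 ≠ 0 := by
      rw [sub_ne_zero]; rintro rfl; norm_num at hs2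
    apply DifferentiableAt.differentiableWithinAt
    rw [hf]; unfold aux
    have := hgd s
    fun_prop (disch := assumption)
  have hlog : ∀ r : ℝ, Real.exp (r * Real.log D) = D ^ r := fun r => by
    rw [Real.rpow_def_of_pos hD0, mul_comm]
  have hgL : ∀ s : ℂ, s ≠ 1 → s.re ≤ 7/2 → ‖g s / (s - 6)‖ ≤ ‖LFunction χ s‖ := by
    intro s hs1 hs2
    have hs6 : 0 < ‖s - 6‖ := by
      rw [norm_pos_iff, sub_ne_zero]; rintro rfl; norm_num at hs2
    rw [hge s hs1, norm_div, norm_mul, div_le_iff₀ hs6, mul_comm]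
    gcongr
    exact norm_frac s hs2
  have hleft : ∀ s : ℂ, s.re = -5/2 → ‖f s‖ ≤ M := by
    intro s hs
    have hs1 : s ≠ 1 := by rintro rfl; norm_num at hs
    have h1 := (hgL s hs1 (by linarith)).trans (norm_LF_left hχ hs)
    rw [hf, aux, norm_mul, norm_mul, norm_e1, norm_e2, hs, hlog]
    have h2 := loc_ineq (x := s.im - T) hT
    rw [add_sub_cancel] at h2
    have e3 : D ^ (((-5/2:ℝ) - 7/2)/2) = (D^3)⁻¹ := by
      rw [show ((-5/2:ℝ) - 7/2)/2 = -((3:ℕ):ℝ) by norm_num, Real.rpow_neg hD0.le, Real.rpow_natCast]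
    rw [e3]
    calc ‖g s / (s-6)‖ * (D^3)⁻¹ * Real.exp (0.0043 * ((-5/2+1/2)^2 - (s.im - T)^2))
        ≤ (1.161 * ((q:ℝ)/(2*Real.pi))^3 * (Real.sqrt (s.im^2 + 25/4))^3) * (D^3)⁻¹ * Real.exp (0.0043 * ((-5/2+1/2)^2 - (s.im - T)^2)) := by gcongr
      _ = 1.161 * (Real.sqrt (s.im^2 + 25/4) / |T|)^3 * Real.exp (0.0043 * ((-5/2+1/2)^2 - (s.im - T)^2)) := by
          rw [hD]; field_simp
      _ ≤ 1.161 * Real.exp (0.0043 * (12 + (s.im - T)^2)) * Real.exp (0.0043 * ((-5/2+1/2)^2 - (s.im - T)^2)) := by gcongr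
      _ = M := by
          rw [mul_assoc, ← Real.exp_add, hM]; congr 2; ring
  have hright : ∀ s : ℂ, s.re = 7/2 → ‖f s‖ ≤ M := by
    intro s hs
    have hs1 : s ≠ 1 := by rintro rfl; norm_num at hs
    have h1 := (hgL s hs1 (by linarith)).trans (norm_LF_right χ hs)
    rw [hf, aux, norm_mul, norm_mul, norm_e1, norm_e2, hs, sub_self, zero_div, zero_mul, Real.exp_zero, mul_one]
    rw [hM]
    exact mul_le_mul h1 (Real.exp_le_exp.mpr (by nlinarith [sq_nonneg (s.im - T)])) (Real.exp_pos _).le (by norm_num)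
  have hz : ∀ ρ ∈ Z, -5/2 < ρ.re ∧ ρ.re < 7/2 ∧ f ρ = 0 := by
    intro ρ hρ
    obtain ⟨a, b, c, d⟩ := hZ ρ hρ
    refine ⟨by linarith, by linarith, ?_⟩
    have : ρ ≠ 1 := by rintro rfl; norm_num at c
    rw [hf, aux, hge ρ this, a]; simp
  set c : ℂ := 2 + T * I with hc
  have hcr : c.re = 2 := by simp [hc]
  have hci : c.im = T := by simp [hc]
  have key := blaschke_PL Z f M hfd (aux_growth χ hge D T) hleft hright hz c (by rw [hcr]; norm_num) (by rw [hcr]; norm_num)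
  -- product bound
  set P := ∏ ρ ∈ Z, bl ρ c with hP
  have hbl0 : ∀ ρ, 0 ≤ bl ρ c := fun ρ => by rw [bl]; positivity
  have hP0 : 0 ≤ P := Finset.prod_nonneg fun ρ _ => hbl0 ρ
  have hP2 : P = ∏ ρ ∈ Z, bl (1 - conj ρ) c := by
    rw [hP]
    refine Finset.prod_nbij' (fun ρ => 1 - conj ρ) (fun ρ => 1 - conj ρ) hsym hsym ?_ ?_ ?_
    · intro ρ _; simp
    · intro ρ _; simp
    · intro ρ _; simp
  have hP4 : P^4 ≤ (0.095:ℝ)^Z.card := by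
    have : P^4 = ∏ ρ ∈ Z, ((bl ρ c)^2 * (bl (1 - conj ρ) c)^2) := by
      rw [Finset.prod_mul_distrib, Finset.prod_pow, Finset.prod_pow, ← hP2, ← hP]; ring
    rw [this, ← Finset.prod_const]
    apply Finset.prod_le_prod
    · intro ρ _; positivity
    · intro ρ hρ
      obtain ⟨_, b, c, d⟩ := hZ ρ hρ
      exact bl_pair b c d
  have hexp : (0.095:ℝ) ≤ Real.exp (-(4*0.588)) := by
    have h1 := Real.exp_one_lt_d9
    have h2 := expU (x := 0.352) (by norm_num) (by norm_num)
    have h3 : Real.exp (4*0.588) ≤ 1/0.095 := by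
      rw [show (4*0.588:ℝ) = 1 + 1 + 0.352 by norm_num, Real.exp_add, Real.exp_add]
      calc Real.exp 1 * Real.exp 1 * Real.exp 0.352 ≤ 2.7182818286 * 2.7182818286 * (1 + 0.352 + 0.352^2/2 + 0.352^3/6 + 0.352^4/24 + 0.352^5/120 + 0.352^6/600) := by gcongr
        _ ≤ _ := by norm_num
    rw [Real.exp_neg, le_inv_comm₀ (by norm_num) (Real.exp_pos _)]
    norm_num at h3 ⊢
    linarith
  have hPe : P ≤ Real.exp (-(0.588 * Z.card)) := by
    have : P^4 ≤ (Real.exp (-(0.588 * Z.card)))^4 := by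
      refine hP4.trans ?_
      rw [← Real.exp_nat_mul]
      calc (0.095:ℝ)^Z.card ≤ (Real.exp (-(4*0.588)))^Z.card := by gcongr
        _ = _ := by rw [← Real.exp_nat_mul]; congr 1; push_cast; ring
    exact (pow_le_pow_iff_left₀ hP0 (by positivity) (by norm_num)).mp this
  -- lower bound at c
  have hc1 : c ≠ 1 := by intro h; rw [h] at hcr; norm_num at hcr
  have hlow : 0.999 * (6/Real.pi^2) * D^(-(3/4):ℝ) * Real.exp (0.0043 * 6.25) ≤ ‖f c‖ := by
    rw [hf, aux, norm_mul, norm_mul, norm_e1, norm_e2, hcr, hci, hlog, hge c hc1]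
    have hL := norm_LF_two χ hcr
    have hfr : 0.999 * ‖c - 6‖ ≤ ‖c - 1‖ := by
      have : (0.999 * ‖c - 6‖)^2 ≤ ‖c - 1‖^2 := by
        rw [mul_pow, ← normSq_eq_norm_sq, ← normSq_eq_norm_sq, normSq_apply, normSq_apply]
        simp only [sub_re, sub_im, hcr, hci, one_re, one_im]
        norm_num
        have : 105^2 ≤ |T|^2 := by gcongr
        rw [sq_abs] at this
        nlinarith
      exact (pow_le_pow_iff_left₀ (by positivity) (by positivity) two_ne_zero).mp this
    have hs6 : 0 < ‖c - 6‖ := by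
      rw [norm_pos_iff, sub_ne_zero]; intro h; rw [h] at hcr; norm_num at hcr
    have h4 : 0.999 * (6/Real.pi^2) ≤ ‖(c - 1) * LFunction χ c / (c - 6)‖ := by
      rw [norm_div, norm_mul, le_div_iff₀ hs6]
      calc 0.999 * (6/Real.pi^2) * ‖c-6‖ = (0.999 * ‖c-6‖) * (6/Real.pi^2) := by ring
        _ ≤ ‖c-1‖ * ‖LFunction χ c‖ := by gcongr
    have e5 : D ^ (-(3/4):ℝ) = D ^ (((2:ℝ) - 7/2)/2) := by norm_num
    rw [e5]
    gcongr
    norm_num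
  have hfin := hlow.trans (key.trans (mul_le_mul_of_nonneg_left hPe (by positivity)))
  -- take logs
  have hlogs := Real.log_le_log (by positivity) hfin
  rw [Real.log_mul (by positivity) (by positivity), Real.log_mul (by positivity) (by positivity),
    Real.log_mul (by positivity) (by positivity), Real.log_rpow hD0, Real.log_exp, hM,
    Real.log_mul (by positivity) (by positivity), Real.log_mul (by positivity) (by positivity),
    Real.log_exp, Real.log_exp, Real.log_div (by norm_num) (by positivity)] at hlogs
  have hnum : Real.log 1.161 + Real.log (Real.pi^2) - Real.log 6 - Real.log 0.999 + 0.0043*9.75 ≤ 0.7 := by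
    have e : Real.log 1.161 + Real.log (Real.pi^2) - Real.log 6 - Real.log 0.999 = Real.log (1.161 * Real.pi^2 / 6 / 0.999) := by
      rw [Real.log_div (by positivity) (by norm_num), Real.log_div (by positivity) (by norm_num), Real.log_mul (by norm_num) (by positivity)]
    rw [e]
    have : Real.log (1.161 * Real.pi^2 / 6 / 0.999) ≤ 0.65 := by
      rw [Real.log_le_iff_le_exp (by positivity)]
      have h1 := expL (x := 0.65) (by norm_num)
      have h2 : Real.pi^2 ≤ 9.8697 := by nlinarith [Real.pi_lt_d4]
      norm_num at h1 ⊢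
      linarith
    linarith
  linarith

end SGZ

set_option linter.unusedSectionVars false
namespace SGZ
open Complex
open scoped ComplexConjugate

lemma gint {c : ℝ} (hc : 0 < c) {p : ℝ} (hp : -1 < p) (B : ℝ) :
    IntegrableOn (fun t : ℝ => t ^ p * Real.exp (-c * t^2/2 + B * t)) (Ioi 0) := by
  have h1 := (integrableOn_rpow_mul_exp_neg_mul_sq (b := c/4) (by positivity) hp).const_mul (Real.exp (B^2/c))
  apply Integrable.mono' h1
  · apply Measurable.aestronglyMeasurable; fun_prop
  · refine (ae_restrict_mem measurableSet_Ioi).mono fun t ht => ?_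
    have ht : (0:ℝ) < t := ht
    have h0 := Real.rpow_nonneg ht.le p
    rw [Real.norm_eq_abs, abs_of_nonneg (by positivity)]
    rw [mul_left_comm, ← Real.exp_add]
    refine mul_le_mul_of_nonneg_left (Real.exp_le_exp.mpr ?_) h0
    have : B^2/c + -(c/4) * t^2 - (-c*t^2/2 + B*t) = (B - c*t/2)^2 / c := by field_simp; ring
    have h2 : 0 ≤ (B - c*t/2)^2 / c := by positivity
    linarith

/-- rotated kernel -/
noncomputable def Kr (δ : ℝ) (s w : ℂ) (t : ℝ) : ℂ :=
  (t:ℂ)^s * cexp (-(w^2*(t:ℂ)^2)/2 + 2 * Real.pi * I * δ * w * t)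

def Usec : Set ℂ := {w | |w.im| < w.re}

lemma Usec_open : IsOpen Usec := by
  apply isOpen_lt <;> fun_prop

lemma Usec_convex : Convex ℝ Usec := by
  intro x hx y hy a b ha hb hab
  simp only [Usec, mem_ofPred_eq, abs_lt] at *
  simp only [add_re, add_im, real_smul, mul_re, mul_im, ofReal_re, ofReal_im, zero_mul, sub_zero, add_zero]
  rcases eq_or_lt_of_le ha with h | h
  · have : b = 1 := by linarith
    subst this; rw [← h]; constructor <;> linarith
  · constructor <;> nlinarith

lemma Kr_norm (δ : ℝ) (s w : ℂ) {t : ℝ} (ht : 0 < t) :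
    ‖Kr δ s w t‖ = t ^ s.re * Real.exp (-(w.re^2 - w.im^2) * t^2/2 + (-2*Real.pi*δ*w.im) * t) := by
  rw [Kr, norm_mul, norm_cpow_eq_rpow_re_of_pos ht, norm_exp]
  congr 2
  have e : (-(w^2*(t:ℂ)^2)/2 + 2 * Real.pi * I * δ * w * t) =
    ((-(w.re^2 - w.im^2) * t^2/2 + (-2*Real.pi*δ*w.im) * t : ℝ):ℂ) + ((-(w.re*w.im)*t^2 + 2*Real.pi*δ*w.re*t : ℝ):ℂ) * I := by
    conv_lhs => rw [← re_add_im w]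
    push_cast
    ring_nf
    simp only [I_sq]
    ring
  rw [e, add_re, re_ofReal_mul, ofReal_re, I_re, mul_zero, add_zero]

lemma Kr_meas (δ : ℝ) (s w : ℂ) : Measurable (Kr δ s w) := by
  unfold Kr; fun_prop

lemma Kr_int (δ : ℝ) {s w : ℂ} (hs : 0 < s.re) (hw : w ∈ Usec) : IntegrableOn (Kr δ s w) (Ioi 0) := by
  have hw : |w.im| < w.re := hw
  have hc : 0 < w.re^2 - w.im^2 := by
    have := sq_lt_sq' (by linarith [abs_nonneg w.im]) hw
    rw [sq_abs] at this; linarith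
  apply Integrable.mono' (gint hc (p := s.re) (by linarith) (-2*Real.pi*δ*w.im)) (Kr_meas δ s w).aestronglyMeasurable
  refine (ae_restrict_mem measurableSet_Ioi).mono fun t ht => ?_
  rw [Kr_norm δ s w ht]

lemma Kr_diff (δ : ℝ) {s : ℂ} (hs : 0 < s.re) {w₀ : ℂ} (hw : w₀ ∈ Usec) :
    DifferentiableAt ℂ (fun w => ∫ t in Ioi 0, Kr δ s w t) w₀ := by
  have hw' : |w₀.im| < w₀.re := hw
  have hc : 0 < w₀.re^2 - w₀.im^2 := by
    have := sq_lt_sq' (by linarith [abs_nonneg w₀.im]) hw'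
    rw [sq_abs] at this; linarith
  set c := (w₀.re^2 - w₀.im^2)/2 with hcd
  have hc' : 0 < c := by positivity
  set M := ‖w₀‖ + 1
  have hM : 0 < M := by positivity
  let S : Set ℂ := {w | c < w.re^2 - w.im^2} ∩ {w | ‖w‖ < M}
  have hS : S ∈ nhds w₀ := by
    apply IsOpen.mem_nhds
    · apply IsOpen.inter
      · apply isOpen_lt <;> fun_prop
      · apply isOpen_lt <;> fun_prop
    · constructor
      · show c < _
        rw [hcd]; linarith
      · show _ < M
        simp [M]
  set B := 2 * Real.pi * |δ| * M
  have i1 := (gint hc' (p := s.re + 2) (by linarith) B).const_mul M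
  have i2 := (gint hc' (p := s.re + 1) (by linarith) B).const_mul (2 * Real.pi * |δ|)
  refine (hasDerivAt_integral_of_dominated_loc_of_deriv_le (F := fun w t => Kr δ s w t)
    (F' := fun w t => Kr δ s w t * (-(w*(t:ℂ)^2) + 2 * Real.pi * I * δ * t))
    (s := S) hS (Filter.Eventually.of_forall fun w => (Kr_meas δ s w).aestronglyMeasurable)
    (Kr_int δ hs hw) ?_ (bound := _) ?_ (i1.add i2) ?_).2.differentiableAt
  · apply Measurable.aestronglyMeasurable
    have := Kr_meas δ s w₀
    fun_prop
  · refine (ae_restrict_mem measurableSet_Ioi).mono fun t ht w hwS => ?_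
    have ht : (0:ℝ) < t := ht
    obtain ⟨h1, h2⟩ := hwS
    have h1 : c < w.re^2 - w.im^2 := h1
    have h2 : ‖w‖ < M := h2
    rw [norm_mul, Kr_norm δ s w ht]
    have e1 : ‖-(w*(t:ℂ)^2) + 2 * Real.pi * I * δ * t‖ ≤ M * t^2 + 2*Real.pi*|δ| * t := by
      refine (norm_add_le _ _).trans ?_
      simp only [norm_neg, norm_mul, norm_pow, norm_real, Real.norm_eq_abs, abs_of_pos ht, norm_I, mul_one, abs_of_pos Real.pi_pos, norm_ofNat]
      gcongr
    have e2 : Real.exp (-(w.re^2 - w.im^2) * t^2/2 + (-2*Real.pi*δ*w.im) * t) ≤ Real.exp (-c * t^2/2 + B * t) := by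
      apply Real.exp_le_exp.mpr
      have : -2*Real.pi*δ*w.im ≤ B := by
        have h3 : |δ * w.im| ≤ |δ| * M := by
          rw [abs_mul]; gcongr
          exact (abs_im_le_norm w).trans h2.le
        have := (abs_le.mp h3).1
        simp only [B]
        nlinarith [Real.pi_pos]
      nlinarith [sq_nonneg t]
    have p2 : t ^ (s.re + 2) = t ^ s.re * t^2 := by
      rw [Real.rpow_add ht]; norm_num
    have p1 : t ^ (s.re + 1) = t ^ s.re * t := by
      rw [Real.rpow_add ht, Real.rpow_one]
    have h0 := Real.rpow_nonneg ht.le s.re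
    simp only [Pi.add_apply]
    rw [p1, p2]
    calc _ ≤ t ^ s.re * Real.exp (-c * t^2/2 + B * t) * (M * t^2 + 2*Real.pi*|δ| * t) := by gcongr
      _ = _ := by ring
  · refine Filter.Eventually.of_forall fun t w _ => ?_
    have e : HasDerivAt (fun w : ℂ => -(w^2*(t:ℂ)^2)/2 + 2 * Real.pi * I * δ * w * t) (-(w*(t:ℂ)^2) + 2 * Real.pi * I * δ * t) w := by
      have h1 := (((hasDerivAt_id w).pow 2).mul_const ((t:ℂ)^2)).neg.div_const 2
      have h2 := ((hasDerivAt_id w).const_mul (2 * Real.pi * I * δ : ℂ)).mul_const (t:ℂ)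
      refine (h1.add h2).congr_deriv ?_
      simp only [id]; push_cast; ring
    have := (e.cexp).const_mul ((t:ℂ)^s)
    simp only [Kr]
    refine this.congr_deriv ?_
    ring

lemma Kr_rot (δ : ℝ) {s : ℂ} (hs : 0 < s.re) {w : ℂ} (hw : w ∈ Usec) :
    w ^ (s+1) * ∫ t in Ioi 0, Kr δ s w t = ∫ t in Ioi 0, Kr δ s 1 t := by
  have hre : ∀ w ∈ Usec, 0 < w.re := fun w hw => lt_of_le_of_lt (abs_nonneg _) hw
  have hd : DifferentiableOn ℂ (fun w => w ^ (s+1) * ∫ t in Ioi 0, Kr δ s w t) Usec := by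
    intro w hw
    apply DifferentiableAt.differentiableWithinAt
    apply DifferentiableAt.mul
    · exact (differentiableAt_id).cpow_const (Or.inl (hre w hw))
    · exact Kr_diff δ hs hw
  have ha := hd.analyticOnNhd Usec_open
  have h1 : (1:ℂ) ∈ Usec := by simp [Usec]
  have key : ∀ x : ℝ, 0 < x → (x:ℂ) ^ (s+1) * ∫ t in Ioi 0, Kr δ s x t = ∫ t in Ioi 0, Kr δ s 1 t := by
    intro x hx
    have h2 := integral_comp_mul_left_Ioi (fun t => Kr δ s 1 t) 0 hx
    rw [mul_zero] at h2
    have h3 : ∫ t in Ioi 0, Kr δ s 1 (x * t) = (x:ℂ)^s * ∫ t in Ioi 0, Kr δ s x t := by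
      rw [← integral_const_mul]
      refine setIntegral_congr_fun measurableSet_Ioi fun t ht => ?_
      have ht : (0:ℝ) < t := ht
      simp only [Kr]
      rw [ofReal_mul, mul_cpow_ofReal_nonneg hx.le ht.le]
      rw [mul_assoc]
      congr 3
      ring
    rw [h3] at h2
    have hx0 : (x:ℂ) ≠ 0 := by exact_mod_cast hx.ne'
    rw [cpow_add _ _ hx0, cpow_one, mul_right_comm, h2, real_smul]
    push_cast
    field_simp
  have hfr : ∃ᶠ z in nhdsWithin (1:ℂ) {1}ᶜ, z ^ (s+1) * ∫ t in Ioi 0, Kr δ s z t = ∫ t in Ioi 0, Kr δ s 1 t := by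
    have ht : Filter.Tendsto (fun x : ℝ => (x:ℂ)) (nhdsWithin 1 {1}ᶜ) (nhdsWithin (1:ℂ) {1}ᶜ) := by
      apply tendsto_nhdsWithin_iff.mpr; constructor
      · have : Filter.Tendsto (fun x : ℝ => (x:ℂ)) (nhds 1) (nhds ((1:ℝ):ℂ)) := continuous_ofReal.continuousAt
        rw [ofReal_one] at this
        exact this.mono_left nhdsWithin_le_nhds
      · filter_upwards [self_mem_nhdsWithin] with x hx
        simpa using hx
    refine ht.frequently ?_
    apply Filter.Eventually.frequently
    have : ∀ᶠ x : ℝ in nhdsWithin 1 {1}ᶜ, 0 < x := nhdsWithin_le_nhds (lt_mem_nhds one_pos)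
    filter_upwards [this] with x hx
    exact key x hx
  exact ha.eqOn_of_preconnected_of_frequently_eq analyticOnNhd_const Usec_convex.isPreconnected h1 hfr hw

/-- A2 -/
lemma F_bound (δ : ℝ) {s : ℂ} (hs : 0 < s.re) {θ : ℝ} (hθ : |θ| < Real.pi/4) :
    ‖∫ t in Ioi 0, Kr δ s 1 t‖ ≤ Real.exp (-θ * s.im) *
      ∫ t in Ioi (0:ℝ), t ^ s.re * Real.exp (-Real.cos (2*θ) * t^2/2 + (-2*Real.pi*δ*Real.sin θ) * t) := by
  set w : ℂ := cexp (θ * I) with hwd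
  have hre : w.re = Real.cos θ := exp_ofReal_mul_I_re θ
  have him : w.im = Real.sin θ := exp_ofReal_mul_I_im θ
  have hθ' := abs_lt.mp hθ
  have hcos2 : 0 < Real.cos (2*θ) := Real.cos_pos_of_mem_Ioo ⟨by linarith, by linarith⟩
  have hcos : 0 < Real.cos θ := Real.cos_pos_of_mem_Ioo ⟨by linarith [Real.pi_pos], by linarith [Real.pi_pos]⟩
  have hc2 : Real.cos (2*θ) = w.re^2 - w.im^2 := by rw [hre, him, Real.cos_two_mul']
  have hw : w ∈ Usec := by
    show |w.im| < w.re
    apply abs_lt_of_sq_lt_sq _ (by rw [hre]; exact hcos.le)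
    linarith
  rw [← Kr_rot δ hs hw, norm_mul]
  have e1 : ‖w ^ (s+1)‖ = Real.exp (-θ * s.im) := by
    rw [hwd, cpow_def_of_ne_zero (exp_ne_zero _), log_exp (by simp; linarith [Real.pi_pos]) (by simp; linarith [Real.pi_pos]), norm_exp]
    simp
  rw [e1]
  gcongr
  refine (norm_integral_le_integral_norm _).trans (le_of_eq ?_)
  refine setIntegral_congr_fun measurableSet_Ioi fun t ht => ?_
  rw [Kr_norm δ s w ht, hc2, him]

end SGZ

set_option linter.unusedSectionVars false
namespace SGZ
open Complex
open scoped ComplexConjugate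

noncomputable def Mh (r : ℝ) : ℂ := mellin (fun u : ℝ => (hcut u : ℂ)) (I * r)

lemma hcut_meas : Measurable hcut := by
  unfold hcut
  apply Measurable.ite measurableSet_Icc <;> fun_prop

lemma hcut_nonneg (u : ℝ) : 0 ≤ hcut u := by
  unfold hcut
  split_ifs with h
  · have : 0 ≤ 2 - u := by linarith [h.2]
    positivity
  · exact le_rfl

lemma hcut_le (u : ℝ) : hcut u ≤ 8 * Real.exp (3/2) * u^2 := by
  unfold hcut
  split_ifs with h
  · have h2 : 0 ≤ 2 - u := by linarith [h.2]
    have : (2-u)^3 ≤ 2^3 := pow_le_pow_left₀ h2 (by linarith [h.1]) 3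
    have h3 : Real.exp (u - 1/2) ≤ Real.exp (3/2) := Real.exp_le_exp.mpr (by linarith [h.2])
    calc u^2 * (2-u)^3 * Real.exp (u-1/2) ≤ u^2 * 2^3 * Real.exp (3/2) := by gcongr
      _ = _ := by ring
  · positivity

lemma hcut_int {t : ℝ} (ht : 0 < t) : IntegrableOn (fun y : ℝ => hcut (t/y) / y) (Ioi 0) := by
  set C := 8 * Real.exp (3/2) with hC
  have i := (integrable_inv_one_add_sq.const_mul (C * t^2 * (2/t) * (1+4/t^2))).integrableOn (s := Ioi (0:ℝ))
  apply Integrable.mono' i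
  · apply Measurable.aestronglyMeasurable
    have := hcut_meas
    fun_prop
  · refine (ae_restrict_mem measurableSet_Ioi).mono fun y hy => ?_
    have hy : (0:ℝ) < y := hy
    rw [Real.norm_eq_abs, abs_of_nonneg (div_nonneg (hcut_nonneg _) hy.le)]
    by_cases h : t / y ≤ 2
    · have h1 : t ≤ 2 * y := by rwa [div_le_iff₀ hy] at h
      have h2 : hcut (t/y) / y ≤ C * (t/y)^2 / y := by gcongr; exact hcut_le _
      refine h2.trans ?_
      have e : C * (t/y)^2 / y = C * t^2 * (1/y^3) := by field_simp
      rw [e]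
      have h3 : 1/y^3 ≤ (2/t) * (1/y^2) := by
        rw [div_mul_div_comm, div_le_div_iff₀ (by positivity) (by positivity)]
        nlinarith [pow_pos hy 2]
      have h4 : 1/y^2 ≤ (1+4/t^2) * (1+y^2)⁻¹ := by
        rw [← div_eq_mul_inv, div_le_div_iff₀ (by positivity) (by positivity)]
        have : 1 ≤ 4/t^2 * y^2 := by
          rw [div_mul_eq_mul_div, le_div_iff₀ (by positivity)]; nlinarith
        nlinarith
      calc C * t^2 * (1/y^3) ≤ C * t^2 * ((2/t) * ((1+4/t^2) * (1+y^2)⁻¹)) := by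
            gcongr
            exact h3.trans (by gcongr)
        _ = _ := by ring
    · have : hcut (t/y) = 0 := by
        unfold hcut; rw [if_neg]; intro h'; exact h h'.2
      rw [this, zero_div]; positivity

lemma FH_eq (H : ℝ) {y : ℝ} (hy : 0 < y) (hy1 : y ≠ 1) :
    ∫ r in (-H)..H, cexp (-I * r * Real.log y) = 2 * Real.pi * (FH H y : ℂ) := by
  have hL : Real.log y ≠ 0 := Real.log_ne_zero_of_pos_of_ne_one hy hy1
  set L := Real.log y with hLd
  have hLc : (L:ℂ) ≠ 0 := by exact_mod_cast hL
  have h1 := integral_exp_mul_complex (a := -H) (b := H) (c := -I * L) (by simp [hL])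
  have e : ∀ r : ℝ, -I * r * L = -I * L * r := fun r => by ring
  simp_rw [e]
  rw [h1, FH, ← hLd]
  push_cast
  have hpi : (Real.pi:ℂ) ≠ 0 := by exact_mod_cast Real.pi_ne_zero
  have e2 : Complex.sin (H * L) = (cexp (-(H*L) * I) - cexp (H*L*I)) * I / 2 := rfl
  rw [e2]
  have e3 : -I * L * H = -(H*L)*I := by ring
  have e4 : -I * L * -H = H*L*I := by ring
  rw [e3, e4]
  field_simp
  rw [I_sq]; ring

lemma inner_y {t : ℝ} (ht : 0 < t) (r : ℝ) :
    ∫ y in Ioi (0:ℝ), ((hcut (t/y) / y : ℝ) : ℂ) * cexp (-I * r * Real.log y) = (t:ℂ)^(-(I*r)) * Mh r := by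
  have h1 := mellin_comp_inv (fun y : ℝ => (hcut (t * y) : ℂ)) (-(I * r))
  have h2 := mellin_comp_mul_left (fun y : ℝ => (hcut y : ℂ)) (I * r) ht
  rw [neg_neg, h2] at h1
  rw [Mh, ← smul_eq_mul ((t:ℂ)^(-(I*r))), ← h1, mellin]
  refine setIntegral_congr_fun measurableSet_Ioi fun y hy => ?_
  have hy : (0:ℝ) < y := hy
  have hy0 : (y:ℂ) ≠ 0 := by exact_mod_cast hy.ne'
  simp only [smul_eq_mul]
  rw [cpow_sub _ _ hy0, cpow_one, cpow_def_of_ne_zero hy0, ← ofReal_log hy.le, ← div_eq_mul_inv t y]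
  push_cast
  rw [show -I * (r:ℂ) * (Real.log y : ℂ) = Real.log y * -(I * r) by ring]
  ring

lemma prodint {t : ℝ} (ht : 0 < t) (H : ℝ) :
    Integrable (fun p : ℝ × ℝ => ((hcut (t/p.2) / p.2 : ℝ) : ℂ) * cexp (-I * p.1 * Real.log p.2))
      ((volume.restrict (Ioc (-H) H)).prod (volume.restrict (Ioi 0))) := by
  have h1 : Integrable (fun _ : ℝ => (1:ℝ)) (volume.restrict (Ioc (-H) H)) := integrable_const _
  have h2 := h1.mul_prod (hcut_int ht)
  apply Integrable.mono h2
  · apply Measurable.aestronglyMeasurable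
    have := hcut_meas
    fun_prop
  · refine Filter.Eventually.of_forall fun p => ?_
    rw [norm_mul, norm_exp]
    simp

lemma Mh_int (H : ℝ) : IntegrableOn Mh (Ioc (-H) H) := by
  have h := (prodint one_pos H).integral_prod_left
  refine h.congr (Filter.Eventually.of_forall fun r => ?_)
  simp only
  rw [inner_y one_pos r]; simp

lemma hH_eq {H : ℝ} (hH0 : 0 ≤ H) {t : ℝ} (ht : 0 < t) :
    2 * Real.pi * (hH H t : ℂ) = ∫ r in Ioc (-H) H, (t:ℂ)^(-(I*r)) * Mh r := by
  have h := integral_integral_swap (f := fun r y : ℝ => ((hcut (t/y) / y : ℝ) : ℂ) * cexp (-I * r * Real.log y)) (prodint ht H)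
  rw [show (∫ r in Ioc (-H) H, (t:ℂ)^(-(I*r)) * Mh r) = ∫ r in Ioc (-H) H, ∫ y in Ioi (0:ℝ), ((hcut (t/y) / y : ℝ) : ℂ) * cexp (-I * r * Real.log y) from by
    congr 1; ext r; rw [inner_y ht r]]
  rw [h, hH, ← integral_complex_ofReal, ← integral_const_mul]
  apply integral_congr_ae
  have hne : ∀ᵐ y : ℝ ∂(volume.restrict (Ioi (0:ℝ))), y ≠ 1 := by
    apply ae_restrict_of_ae
    exact (measure_eq_zero_iff_ae_notMem.mp (measure_singleton (μ := volume) (1:ℝ)))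
  filter_upwards [ae_restrict_mem measurableSet_Ioi, hne] with y hy hy1
  rw [integral_const_mul, ← intervalIntegral.integral_of_le (by linarith), FH_eq H hy hy1]
  push_cast; ring

lemma G_bound0 {H : ℝ} (hH0 : 0 ≤ H) (δ : ℝ) {s : ℂ} (hs : 0 < s.re) :
    2 * Real.pi * ‖mellin (fun t => (etaPlus H t : ℂ) * e2pi (δ * t)) s‖ ≤
      ∫ r in Ioc (-H) H, ‖Mh r‖ * ‖∫ t in Ioi 0, Kr δ (s - I * r) 1 t‖ := by
  have hK : IntegrableOn (Kr δ s 1) (Ioi 0) := Kr_int δ hs (by simp [Usec])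
  have hKs : ∀ (r t : ℝ), 0 < t → Kr δ (s - I*r) 1 t = Kr δ s 1 t * cexp (-I * r * Real.log t) := by
    intro r t ht
    have ht0 : (t:ℂ) ≠ 0 := by exact_mod_cast ht.ne'
    simp only [Kr]
    rw [sub_eq_add_neg, cpow_add _ _ ht0, cpow_def_of_ne_zero ht0 (-(I*r)), ← ofReal_log ht.le,
      show -I * (r:ℂ) * (Real.log t : ℂ) = Real.log t * -(I * r) by ring]
    ring
  have hi : Integrable (fun p : ℝ × ℝ => Mh p.1 * (Kr δ s 1 p.2 * cexp (-I * p.1 * Real.log p.2)))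
      ((volume.restrict (Ioc (-H) H)).prod (volume.restrict (Ioi 0))) := by
    have h2 := (Mh_int H).mul_prod hK
    have h3 : AEStronglyMeasurable (fun p : ℝ × ℝ => cexp (-I * p.1 * Real.log p.2)) ((volume.restrict (Ioc (-H) H)).prod (volume.restrict (Ioi 0))) := by
      apply Measurable.aestronglyMeasurable; fun_prop
    have h4 := h2.mul_bdd (c := 1) h3 (Filter.Eventually.of_forall fun p => by rw [norm_exp]; simp)
    refine h4.congr (Filter.Eventually.of_forall fun p => ?_)
    simp only; ring
  have hsw := integral_integral_swap (f := fun r t : ℝ => Mh r * (Kr δ s 1 t * cexp (-I * r * Real.log t))) hi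
  have hG : 2 * Real.pi * mellin (fun t => (etaPlus H t : ℂ) * e2pi (δ * t)) s =
      ∫ r in Ioc (-H) H, Mh r * ∫ t in Ioi 0, Kr δ (s - I * r) 1 t := by
    have e1 : (∫ r in Ioc (-H) H, Mh r * ∫ t in Ioi 0, Kr δ (s - I * r) 1 t) =
      ∫ r in Ioc (-H) H, ∫ t in Ioi (0:ℝ), Mh r * (Kr δ s 1 t * cexp (-I * r * Real.log t)) := by
      congr 1; ext r
      rw [integral_const_mul]
      congr 1
      exact setIntegral_congr_fun measurableSet_Ioi fun t ht => hKs r t ht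
    rw [e1, hsw, mellin, ← integral_const_mul]
    refine setIntegral_congr_fun measurableSet_Ioi fun t ht => ?_
    have ht : (0:ℝ) < t := ht
    have ht0 : (t:ℂ) ≠ 0 := by exact_mod_cast ht.ne'
    have e2 : ∫ r in Ioc (-H) H, Mh r * (Kr δ s 1 t * cexp (-I * r * Real.log t)) = Kr δ s 1 t * (2 * Real.pi * hH H t) := by
      rw [hH_eq hH0 ht, ← integral_const_mul]
      congr 1; ext r
      rw [cpow_def_of_ne_zero ht0 (-(I*r)), ← ofReal_log ht.le,
      show -I * (r:ℂ) * (Real.log t : ℂ) = Real.log t * -(I * r) by ring]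
      ring
    rw [e2]
    simp only [smul_eq_mul, Kr, etaPlus, e2pi]
    rw [cpow_sub _ _ ht0, cpow_one, Complex.exp_add]
    push_cast
    field_simp
  have e3 : 2 * Real.pi * ‖mellin (fun t => (etaPlus H t : ℂ) * e2pi (δ * t)) s‖ = ‖2 * Real.pi * mellin (fun t => (etaPlus H t : ℂ) * e2pi (δ * t)) s‖ := by
    rw [norm_mul, norm_mul, norm_real, Real.norm_eq_abs, abs_of_pos Real.pi_pos, norm_ofNat]
  rw [e3, hG]
  refine (norm_integral_le_integral_norm _).trans (le_of_eq ?_)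
  congr 1; ext r; rw [norm_mul]

end SGZ

set_option linter.unusedSectionVars false
namespace SGZ
open Complex
open scoped ComplexConjugate

lemma Mh_eq (r : ℝ) : Mh r = ∫ t in (0:ℝ)..2, (t:ℂ)^(I*r + 1) * ((2 - t)^3 * cexp (t - 1/2)) := by
  rw [Mh, mellin, intervalIntegral.integral_of_le (by norm_num)]
  have : ∫ t in Ioc (0:ℝ) 2, (t:ℂ)^(I*r - 1) • (hcut t : ℂ) = ∫ t in Ioi (0:ℝ), (t:ℂ)^(I*r - 1) • (hcut t : ℂ) := by
    symm
    apply setIntegral_eq_of_subset_of_forall_sdiff_eq_zero measurableSet_Ioi (fun t ht => ht.1)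
    intro t ht
    have : hcut t = 0 := by
      unfold hcut; rw [if_neg]; intro h'; exact ht.2 ⟨ht.1, h'.2⟩
    rw [this]; simp
  rw [← this]
  refine setIntegral_congr_fun measurableSet_Ioc fun t ht => ?_
  have ht0 : (t:ℂ) ≠ 0 := by exact_mod_cast ht.1.ne'
  have e : hcut t = t^2 * (2 - t)^3 * Real.exp (t - 1/2) := by
    unfold hcut; rw [if_pos ⟨ht.1.le, ht.2⟩]
  simp only [smul_eq_mul]
  rw [e, cpow_sub _ _ ht0, cpow_add _ _ ht0, cpow_one]
  push_cast
  field_simp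

lemma k0_val : ∫ t in (0:ℝ)..2, t * (t * (2-t) * (1/2 - 7/4*t + 7/4*t^2 + t^3) * Real.exp (t-1/2)) ≤ 6.5 * 2.0206 := by
  have hd : ∀ t ∈ uIcc (0:ℝ) 2, HasDerivAt (fun t : ℝ => (6.5 * (-t^4+10*t^3-42*t^2+92*t-92) - t^2 * (13/4*(2-t)^3 + t*(1+t)*(2-t)^2)) * Real.exp (t-1/2))
      (t * (t * (2-t) * (1/2 - 7/4*t + 7/4*t^2 + t^3) * Real.exp (t-1/2))) t := by
    intro t _
    have hp : HasDerivAt (fun t : ℝ => (6.5 * (-t^4+10*t^3-42*t^2+92*t-92) - t^2 * (13/4*(2-t)^3 + t*(1+t)*(2-t)^2)))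
       (6.5 * (-4*t^3+30*t^2-84*t+92) - (2*t*(13/4*(2-t)^3 + t*(1+t)*(2-t)^2) + t^2*(-39/4*(2-t)^2 + (1+2*t)*(2-t)^2 - 2*t*(1+t)*(2-t)))) t := by
      have h1 := hasDerivAt_id t
      have h2 := (hasDerivAt_const t (2:ℝ)).sub h1
      have a := (((((h1.pow 4).neg.add ((h1.pow 3).const_mul 10)).sub ((h1.pow 2).const_mul 42)).add (h1.const_mul 92)).sub_const 92).const_mul 6.5
      have b := (h1.pow 2).mul (((h2.pow 3).const_mul (13/4)).add ((h1.mul (h1.const_add 1)).mul (h2.pow 2)))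
      refine (a.sub b).congr_deriv ?_
      simp
      ring
    have he : HasDerivAt (fun t : ℝ => Real.exp (t-1/2)) (Real.exp (t-1/2)) t := by
      exact ((hasDerivAt_id t).sub_const (1/2)).exp.congr_deriv (by simp)
    refine (hp.mul he).congr_deriv ?_
    ring
  rw [intervalIntegral.integral_eq_sub_of_hasDerivAt hd (by apply Continuous.intervalIntegrable; fun_prop)]
  set x := Real.exp (-1/2) with hx
  have hx0 : 0 < x := Real.exp_pos _
  have hxx : x * x * Real.exp 1 = 1 := by
    rw [hx, ← Real.exp_add, ← Real.exp_add]; norm_num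
  have h2 : Real.exp (2 - 1/2) = x * (Real.exp 1 * Real.exp 1) := by
    rw [hx, ← Real.exp_add, ← Real.exp_add]; norm_num
  rw [h2, show (0:ℝ) - 1/2 = -1/2 by norm_num, ← hx]
  have he := Real.exp_one_gt_d9
  have hxl : x ≤ 0.606531 := by nlinarith
  have hee : 2.7182818283^2 ≤ Real.exp 1 * Real.exp 1 := by nlinarith
  have : x * (92 - 12 * (Real.exp 1 * Real.exp 1)) ≤ 2.0206 := by
    have h3 : 92 - 12 * (Real.exp 1 * Real.exp 1) ≤ 3.33133 := by norm_num at hee ⊢; linarith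
    calc _ ≤ x * 3.33133 := by gcongr
      _ ≤ _ := by linarith
  norm_num at this ⊢
  linarith

lemma Mh_bound (r : ℝ) : ‖Mh r‖ ≤ 2.0206 * 6.5 / (6.5 + r^2) := by
  set z : ℂ := I * r with hz
  have hzre : z.re = 0 := by simp [hz]
  let W : ℝ → ℂ := fun t => (t:ℂ)^(z+2) * (((13/4+z)*(2-t)^3 + t*(1+t)*(2-t)^2) * cexp (t-1/2))
  have hcp : ∀ a : ℂ, 0 < a.re → Continuous fun t : ℝ => (t:ℂ)^a := fun a ha => continuous_ofReal_cpow_const ha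
  have hW : ContinuousOn W (Icc 0 2) := by
    apply Continuous.continuousOn
    have := hcp (z+2) (by simp [hzre])
    fun_prop
  let k : ℝ → ℂ := fun t => (t:ℂ)^(z+1) * (t * (2-t) * (1/2 - 7/4*t + 7/4*t^2 + t^3) * cexp (t-1/2))
  let m : ℝ → ℂ := fun t => (t:ℂ)^(z+1) * ((2 - t)^3 * cexp (t - 1/2))
  have hkc : Continuous k := by
    have := hcp (z+1) (by simp [hzre])
    fun_prop
  have hmc : Continuous m := by
    have := hcp (z+1) (by simp [hzre])
    fun_prop
  have hd : ∀ t ∈ Ioo (0:ℝ) 2, HasDerivAt W ((2+z)*(13/4+z) * m t - k t) t := by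
    intro t ht
    have ht0 : (t:ℂ) ≠ 0 := by exact_mod_cast ht.1.ne'
    have h1 : HasDerivAt (fun t : ℂ => t^(z+2) * (((13/4+z)*(2-t)^3 + t*(1+t)*(2-t)^2) * cexp (t-1/2)))
       ((z+2) * (t:ℂ)^(z+1) * (((13/4+z)*(2-t)^3 + t*(1+t)*(2-t)^2) * cexp (t-1/2)) +
         (t:ℂ)^(z+2) * (((13/4+z)*(-3*(2-t)^2) + ((1+2*t)*(2-t)^2 - 2*t*(1+t)*(2-t))) * cexp (t-1/2)
           + ((13/4+z)*(2-t)^3 + t*(1+t)*(2-t)^2) * cexp (t-1/2))) (t:ℂ) := by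
      have hi := hasDerivAt_id (t:ℂ)
      have a : HasDerivAt (fun t : ℂ => t^(z+2)) ((z+2) * (t:ℂ)^(z+1)) (t:ℂ) := by
        have := hi.cpow_const (c := z+2) (Or.inl (by simpa using ht.1))
        refine this.congr_deriv ?_
        simp only [id]; rw [show z + 2 - 1 = z + 1 by ring, mul_one]
      have h2 := (hasDerivAt_const (t:ℂ) (2:ℂ)).sub hi
      have b := (((h2.pow 3).const_mul (13/4+z)).add ((hi.mul (hi.const_add 1)).mul (h2.pow 2)))
      have he : HasDerivAt (fun t : ℂ => cexp (t-1/2)) (cexp (t-1/2)) (t:ℂ) := by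
        exact (hi.sub_const (1/2)).cexp.congr_deriv (by simp)
      refine (a.mul (b.mul he)).congr_deriv ?_
      simp only [id, Pi.sub_apply, Pi.add_apply, Pi.mul_apply, Pi.pow_apply, Nat.reduceSub]
      push_cast
      ring
    have h2 := h1.comp_ofReal
    refine h2.congr_deriv ?_
    simp only [m, k]
    rw [show z + 2 = (z+1) + 1 by ring, cpow_add (z+1) 1 ht0, cpow_one]
    ring
  have hI := intervalIntegral.integral_eq_sub_of_hasDerivAt_of_le (by norm_num) hW hd
    (by apply Continuous.intervalIntegrable; fun_prop)
  have hW0 : W 0 = 0 := by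
    simp only [W, ofReal_zero]
    rw [zero_cpow, zero_mul]
    intro h
    have := congrArg re h
    simp [hzre] at this
  have hW2 : W 2 = 0 := by simp [W]
  rw [hW0, hW2, sub_zero, intervalIntegral.integral_sub (by apply Continuous.intervalIntegrable; fun_prop) (hkc.intervalIntegrable _ _),
    intervalIntegral.integral_const_mul, sub_eq_zero] at hI
  have hM : Mh r = ∫ t in (0:ℝ)..2, m t := Mh_eq r
  rw [← hM] at hI
  have hk : ‖∫ t in (0:ℝ)..2, k t‖ ≤ 6.5 * 2.0206 := by
    refine le_trans ?_ k0_val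
    refine (intervalIntegral.norm_integral_le_integral_norm (by norm_num)).trans ?_
    apply intervalIntegral.integral_mono_on (by norm_num) (hkc.norm.intervalIntegrable _ _) (by apply Continuous.intervalIntegrable; fun_prop)
    intro t ht
    simp only [k]
    have hp : 0 ≤ 1/2 - 7/4*t + 7/4*t^2 + t^3 := by
      have : 0 ≤ t^3 := pow_nonneg ht.1 3
      nlinarith [sq_nonneg (t - 1/2)]
    have h2 : 0 ≤ 2 - t := by linarith [ht.2]
    have e : (t * (2-t) * (1/2 - 7/4*t + 7/4*t^2 + t^3) * cexp (t-1/2) : ℂ) = ((t * (2-t) * (1/2 - 7/4*t + 7/4*t^2 + t^3) * Real.exp (t-1/2) : ℝ):ℂ) := by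
      push_cast; ring
    have ht0 := ht.1
    rw [e, norm_mul, norm_real, Real.norm_eq_abs, abs_of_nonneg (by positivity)]
    refine mul_le_mul_of_nonneg_right ?_ (by positivity)
    rw [norm_cpow_eq_rpow_re_of_nonneg ht0 (by simp [hzre])]
    simp [hzre]
  rw [← hI, norm_mul] at hk
  have hn : 6.5 + r^2 ≤ ‖(2+z)*(13/4+z)‖ := by
    apply le_of_sq_le_sq _ (norm_nonneg _)
    rw [norm_mul, mul_pow, ← normSq_eq_norm_sq, ← normSq_eq_norm_sq, normSq_apply, normSq_apply]
    simp [hz]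
    nlinarith [sq_nonneg r]
  rw [le_div_iff₀ (by positivity)]
  calc ‖Mh r‖ * (6.5 + r^2) ≤ ‖Mh r‖ * ‖(2+z)*(13/4+z)‖ := by gcongr
    _ ≤ _ := by rw [mul_comm]; linarith

lemma g_int (a b : ℝ) : ∫ r in a..b, (2.0206 * 6.5 / (6.5 + r^2) : ℝ) = 2.0206 * Real.sqrt 6.5 * (Real.arctan (b / Real.sqrt 6.5) - Real.arctan (a / Real.sqrt 6.5)) := by
  have hs : 0 < Real.sqrt 6.5 := Real.sqrt_pos.mpr (by norm_num)
  have hss : Real.sqrt 6.5 ^ 2 = 6.5 := Real.sq_sqrt (by norm_num)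
  have hd : ∀ r ∈ uIcc a b, HasDerivAt (fun r : ℝ => 2.0206 * Real.sqrt 6.5 * Real.arctan (r / Real.sqrt 6.5)) (2.0206 * 6.5 / (6.5 + r^2) : ℝ) r := by
    intro r _
    have := (((hasDerivAt_id r).div_const (Real.sqrt 6.5)).arctan).const_mul (2.0206 * Real.sqrt 6.5)
    refine this.congr_deriv ?_
    simp only [id]
    rw [div_pow, hss]
    field_simp
    try norm_num
  rw [intervalIntegral.integral_eq_sub_of_hasDerivAt hd]
  · ring
  · apply Continuous.intervalIntegrable
    apply Continuous.div (by fun_prop) (by fun_prop)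
    intro r; positivity

lemma Phi_bound {H θ : ℝ} (hH : 5 ≤ H) (hθ : 0 ≤ θ) :
    ∫ r in (-H)..H, 2.0206 * 6.5 / (6.5 + r^2) * Real.exp (-θ * (H - r)) ≤ 2.576 + 13.609 * Real.exp (-5*θ) := by
  have hs : 0 < Real.sqrt 6.5 := Real.sqrt_pos.mpr (by norm_num)
  have hss : Real.sqrt 6.5 ^ 2 = 6.5 := Real.sq_sqrt (by norm_num)
  have hs1 : Real.sqrt 6.5 ≤ 2.54951 := by rw [Real.sqrt_le_left (by norm_num)]; norm_num
  set s := Real.sqrt 6.5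
  set E := Real.exp (-θ * H) with hE
  have hE0 : 0 < E := Real.exp_pos _
  have hE1 : E ≤ 1 := Real.exp_le_one_iff.mpr (by nlinarith)
  have hE5 : E ≤ Real.exp (-5*θ) := Real.exp_le_exp.mpr (by nlinarith)
  have gc : Continuous fun r : ℝ => (2.0206 * 6.5 / (6.5 + r^2) : ℝ) := by
    apply Continuous.div (by fun_prop) (by fun_prop)
    intro r; positivity
  have fc : Continuous fun r : ℝ => 2.0206 * 6.5 / (6.5 + r^2) * Real.exp (-θ * (H - r)) := by fun_prop
  rw [← intervalIntegral.integral_add_adjacent_intervals (b := 0) (fc.intervalIntegrable _ _) (fc.intervalIntegrable _ _)]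
  have i1 : ∫ r in (-H)..0, 2.0206 * 6.5 / (6.5 + r^2) * Real.exp (-θ * (H - r)) ≤ ∫ r in (-H)..0, 2.0206 * 6.5 / (6.5 + r^2) * E := by
    apply intervalIntegral.integral_mono_on (by linarith) (fc.intervalIntegrable _ _) ((gc.mul_const E).intervalIntegrable _ _)
    intro r hr
    refine mul_le_mul_of_nonneg_left (Real.exp_le_exp.mpr ?_) (by positivity)
    nlinarith [hr.2]
  have i2 : ∫ r in (0:ℝ)..H, 2.0206 * 6.5 / (6.5 + r^2) * Real.exp (-θ * (H - r)) ≤ ∫ r in (0:ℝ)..H, (2.0206 * 6.5 / (6.5 + r^2) * E + 2.0206 * s / 2 * (1 - E) / H) := by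
    apply intervalIntegral.integral_mono_on (by linarith) (fc.intervalIntegrable _ _) (((gc.mul_const E).add continuous_const).intervalIntegrable _ _)
    intro r hr
    have hconv : Real.exp (-θ * (H - r)) ≤ E + (1 - E) * (r / H) := by
      have hrH : r / H ≤ 1 := by rw [div_le_one (by linarith)]; exact hr.2
      have hrH0 : 0 ≤ r / H := div_nonneg hr.1 (by linarith)
      have := convexOn_exp.2 (mem_univ (-θ * H)) (mem_univ 0) (sub_nonneg.mpr hrH) hrH0 (by ring)
      simp only [smul_eq_mul, mul_zero, add_zero, Real.exp_zero, mul_one] at this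
      rw [← hE] at this
      rw [show -θ * (H - r) = (1 - r/H) * (-θ * H) by field_simp]
      linarith
    have hg : 2.0206 * 6.5 / (6.5 + r^2) * r ≤ 2.0206 * s / 2 := by
      rw [div_mul_eq_mul_div, div_le_div_iff₀ (by positivity) (by norm_num)]
      have : 0 ≤ 2.0206 * s * (r - s)^2 := by positivity
      nlinarith
    calc _ ≤ 2.0206 * 6.5 / (6.5 + r^2) * (E + (1 - E) * (r / H)) := mul_le_mul_of_nonneg_left hconv (by positivity)
      _ = 2.0206 * 6.5 / (6.5 + r^2) * E + (2.0206 * 6.5 / (6.5 + r^2) * r) * (1 - E) / H := by ring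
      _ ≤ _ := by
        have : 0 ≤ 1 - E := by linarith
        have h := div_le_div_of_nonneg_right (mul_le_mul_of_nonneg_right hg this) (show 0 ≤ H by linarith)
        exact add_le_add le_rfl h
  rw [intervalIntegral.integral_mul_const, g_int] at i1
  rw [intervalIntegral.integral_add ((gc.mul_const E).intervalIntegrable _ _) (by simp), intervalIntegral.integral_mul_const, g_int, intervalIntegral.integral_const] at i2
  simp only [zero_div, Real.arctan_zero, sub_zero, zero_sub, neg_div, Real.arctan_neg, smul_eq_mul, neg_neg] at i1 i2
  rw [show Real.sqrt 6.5 = s from rfl] at i1 i2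
  have hat := Real.arctan_lt_pi_div_two (H / s)
  have e : H * (2.0206 * s / 2 * (1 - E) / H) = 2.0206 * s / 2 * (1 - E) := by field_simp
  rw [e] at i2
  have hA : 2.0206 * s * Real.arctan (H / s) * E ≤ 2.0206 * s * (Real.pi/2) * E := by gcongr
  have h3 : 2.0206 * s * Real.pi * E + 2.0206 * s / 2 * (1 - E) ≤ 2.576 + 13.609 * E := by
    have hpi := Real.pi_lt_d4
    have hB : 2.0206 * s ≤ 5.15155 := by norm_num at hs1 ⊢; linarith
    have : 2.0206 * s * ((Real.pi - 1/2) * E + 1/2) ≤ 5.15155 * ((3.1416 - 1/2) * E + 1/2) := by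
      gcongr
      have := Real.pi_gt_three
      have : 0 ≤ (Real.pi - 1/2) * E := mul_nonneg (by linarith) hE0.le
      linarith
    norm_num at this ⊢
    nlinarith
  have h4 : 13.609 * E ≤ 13.609 * Real.exp (-5*θ) := by gcongr
  linarith

end SGZ

set_option linter.unusedSectionVars false
namespace SGZ
open Complex
open scoped ComplexConjugate

noncomputable def Jint (c b σ : ℝ) : ℝ := ∫ t in Ioi (0:ℝ), t ^ σ * Real.exp (-c * t^2/2 + b * t)

noncomputable def Jb (c B : ℝ) : ℝ := 1/c + (1 + B/c) * (Real.sqrt (2*Real.pi/c) * Real.exp (B^2/(2*c)))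

lemma J_pair {c b B σ : ℝ} (hc : 0 < c) (hbB : b ≤ B) (hB : 0 ≤ B) (hσ0 : 0 ≤ σ) (hσ1 : σ ≤ 1) :
    Jint c b σ + Jint c b (1 - σ) ≤ Jb c B := by
  have g0 := gint hc (p := 0) (by norm_num) B
  have g1 := gint hc (p := 1) (by norm_num) B
  simp only [Real.rpow_zero, Real.rpow_one, one_mul] at g0 g1
  have h1 : Jint c b σ + Jint c b (1 - σ) ≤ ∫ t in Ioi (0:ℝ), (Real.exp (-c * t^2/2 + B * t) + t * Real.exp (-c * t^2/2 + B * t)) := by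
    unfold Jint
    rw [← integral_add (gint hc (by linarith) b) (gint hc (by linarith) b)]
    apply setIntegral_mono_on ((gint hc (by linarith) b).add (gint hc (by linarith) b)) (g0.add g1) measurableSet_Ioi
    intro t ht
    have ht : (0:ℝ) < t := ht
    have hprod : t ^ σ * t ^ (1-σ) = t := by
      rw [← Real.rpow_add ht]; simp
    have hs : t ^ σ + t ^ (1 - σ) ≤ 1 + t := by
      rcases le_total t 1 with h | h
      · have a := Real.rpow_le_one ht.le h hσ0
        have b := Real.rpow_le_one ht.le h (sub_nonneg.mpr hσ1)
        nlinarith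
      · have a := Real.one_le_rpow h hσ0
        have b := Real.one_le_rpow h (sub_nonneg.mpr hσ1)
        nlinarith
    have he : Real.exp (-c * t^2/2 + b * t) ≤ Real.exp (-c * t^2/2 + B * t) := Real.exp_le_exp.mpr (by nlinarith)
    calc t ^ σ * Real.exp (-c * t^2/2 + b * t) + t ^ (1-σ) * Real.exp (-c * t^2/2 + b * t)
        = (t ^ σ + t ^ (1-σ)) * Real.exp (-c * t^2/2 + b * t) := by ring
      _ ≤ (1 + t) * Real.exp (-c * t^2/2 + B * t) := by gcongr
      _ = _ := by simp only [Pi.add_apply]; ring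
  have h2 : ∫ t in Ioi (0:ℝ), (t - B/c) * Real.exp (-c * t^2/2 + B * t) = 1/c := by
    have hd : ∀ t ∈ Ici (0:ℝ), HasDerivAt (fun t : ℝ => -(1/c) * Real.exp (-c * t^2/2 + B * t)) ((t - B/c) * Real.exp (-c * t^2/2 + B * t)) t := by
      intro t _
      have e : HasDerivAt (fun t : ℝ => -c * t^2/2 + B * t) (-c * t + B) t := by
        have := ((((hasDerivAt_id t).pow 2).const_mul (-c)).div_const 2).add ((hasDerivAt_id t).const_mul B)
        refine this.congr_deriv ?_
        simp; ring
      refine (e.exp.const_mul (-(1/c))).congr_deriv ?_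
      field_simp; ring
    have hi : IntegrableOn (fun t : ℝ => (t - B/c) * Real.exp (-c * t^2/2 + B * t)) (Ioi 0) := by
      refine (g1.sub (g0.const_mul (B/c))).congr (Filter.Eventually.of_forall fun t => ?_)
      simp only [Pi.sub_apply]; ring
    have ht : Filter.Tendsto (fun t : ℝ => -(1/c) * Real.exp (-c * t^2/2 + B * t)) Filter.atTop (nhds (-(1/c) * 0)) := by
      apply Filter.Tendsto.const_mul
      apply Real.tendsto_exp_atBot.comp
      have : (fun t : ℝ => -c * t^2/2 + B * t) = fun t => t * (B + (-(c/2)) * t) := by ext t; ring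
      rw [this]
      apply Filter.Tendsto.atTop_mul_atBot₀ Filter.tendsto_id
      apply Filter.tendsto_atBot_add_const_left
      exact Filter.Tendsto.const_mul_atTop_of_neg (by linarith) Filter.tendsto_id
    rw [integral_Ioi_of_hasDerivAt_of_tendsto' hd hi ht]
    simp
  have h3 : ∫ t in Ioi (0:ℝ), Real.exp (-c * t^2/2 + B * t) ≤ Real.sqrt (2*Real.pi/c) * Real.exp (B^2/(2*c)) := by
    have e : ∀ t : ℝ, Real.exp (-c * t^2/2 + B * t) = Real.exp (B^2/(2*c)) * Real.exp (-(c/2) * (t - B/c)^2) := by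
      intro t; rw [← Real.exp_add]; congr 1; field_simp; ring
    have i : Integrable (fun t : ℝ => Real.exp (B^2/(2*c)) * Real.exp (-(c/2) * (t - B/c)^2)) :=
      ((integrable_exp_neg_mul_sq (b := c/2) (by positivity)).comp_sub_right (B/c)).const_mul _
    simp_rw [e]
    refine (setIntegral_le_integral i (Filter.Eventually.of_forall fun t => by positivity)).trans (le_of_eq ?_)
    rw [integral_const_mul, integral_sub_right_eq_self (fun t : ℝ => Real.exp (-(c/2) * t^2)) (B/c), integral_gaussian, mul_comm]
    congr 2; field_simp
  refine h1.trans ?_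
  have h4 : ∫ t in Ioi (0:ℝ), (Real.exp (-c * t^2/2 + B * t) + t * Real.exp (-c * t^2/2 + B * t)) =
      (∫ t in Ioi (0:ℝ), (t - B/c) * Real.exp (-c * t^2/2 + B * t)) + (1 + B/c) * ∫ t in Ioi (0:ℝ), Real.exp (-c * t^2/2 + B * t) := by
    rw [← integral_const_mul, ← integral_add]
    · congr 1; ext t; ring
    · refine (g1.sub (g0.const_mul (B/c))).congr (Filter.Eventually.of_forall fun t => ?_)
      simp only [Pi.sub_apply]; ring
    · exact g0.const_mul _
  rw [h4, h2, Jb]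
  gcongr

lemma G_bound1 {H : ℝ} (hH5 : 5 ≤ H) (δ : ℝ) {s : ℂ} (hs : 0 < s.re) {θ : ℝ} (hθ0 : 0 ≤ θ) (hθ : θ < Real.pi/4)
    {ε : ℝ} (hε : ε = 1 ∨ ε = -1) :
    2 * Real.pi * ‖mellin (fun t => (etaPlus H t : ℂ) * e2pi (δ * t)) s‖ ≤
      (2.576 + 13.609 * Real.exp (-5*θ)) * Real.exp (-θ * (ε * s.im - H)) * Jint (Real.cos (2*θ)) (-2*Real.pi*δ*ε*Real.sin θ) s.re := by
  refine (G_bound0 (by linarith) δ hs).trans ?_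
  set J := Jint (Real.cos (2*θ)) (-2*Real.pi*δ*ε*Real.sin θ) s.re with hJ
  have hJ0 : 0 ≤ J := by
    apply setIntegral_nonneg measurableSet_Ioi
    intro t ht
    have ht : (0:ℝ) < t := ht
    positivity
  have hF : ∀ r : ℝ, ‖∫ t in Ioi 0, Kr δ (s - I * r) 1 t‖ ≤ Real.exp (-θ * (ε * s.im - H)) * Real.exp (-θ * (H - ε * r)) * J := by
    intro r
    have hre : (s - I*r).re = s.re := by simp
    have him : (s - I*r).im = s.im - r := by simp
    have hab : |ε * θ| < Real.pi/4 := by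
      rcases hε with h | h <;> rw [h] <;> simp [abs_of_nonneg hθ0, hθ]
    have h1 := F_bound δ (s := s - I*r) (by rw [hre]; exact hs) hab
    rw [hre, him] at h1
    have hc : Real.cos (2 * (ε * θ)) = Real.cos (2*θ) := by
      rcases hε with h | h <;> rw [h] <;> simp
    have hsn : Real.sin (ε * θ) = ε * Real.sin θ := by
      rcases hε with h | h <;> rw [h] <;> simp
    rw [hc, hsn] at h1
    have e1 : Real.exp (-θ * (ε * s.im - H)) * Real.exp (-θ * (H - ε * r)) = Real.exp (-(ε * θ) * (s.im - r)) := by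
      rw [← Real.exp_add]; congr 1; ring
    rw [e1]
    refine h1.trans (le_of_eq ?_)
    rw [hJ, Jint]
    congr 1
    congr 1; ext t; congr 2; ring
  have gc : Continuous fun r : ℝ => (2.0206 * 6.5 / (6.5 + r^2) : ℝ) := by
    apply Continuous.div (by fun_prop) (by fun_prop)
    intro r; positivity
  have h2 : ∫ r in Ioc (-H) H, ‖Mh r‖ * ‖∫ t in Ioi 0, Kr δ (s - I * r) 1 t‖ ≤
      ∫ r in Ioc (-H) H, (2.0206 * 6.5 / (6.5 + r^2) * Real.exp (-θ * (H - ε * r))) * (Real.exp (-θ * (ε * s.im - H)) * J) := by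
    apply integral_mono_of_nonneg
    · exact Filter.Eventually.of_forall fun r => by positivity
    · apply Continuous.integrableOn_Ioc; fun_prop
    · refine Filter.Eventually.of_forall fun r => ?_
      calc ‖Mh r‖ * ‖∫ t in Ioi 0, Kr δ (s - I * r) 1 t‖ ≤ (2.0206 * 6.5 / (6.5 + r^2)) * (Real.exp (-θ * (ε * s.im - H)) * Real.exp (-θ * (H - ε * r)) * J) :=
            mul_le_mul (Mh_bound r) (hF r) (norm_nonneg _) (by positivity)
        _ = _ := by ring
  refine h2.trans ?_
  rw [← intervalIntegral.integral_of_le (by linarith), intervalIntegral.integral_mul_const, mul_assoc]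
  apply mul_le_mul_of_nonneg_right _ (by positivity)
  rcases hε with h | h
  · rw [h]; simp only [one_mul]; exact Phi_bound hH5 hθ0
  · rw [h]
    have := intervalIntegral.integral_comp_neg (a := -H) (b := H) (fun r : ℝ => 2.0206 * 6.5 / (6.5 + r^2) * Real.exp (-θ * (H - r)))
    rw [neg_neg] at this
    refine le_trans (le_of_eq ?_) (Phi_bound hH5 hθ0)
    rw [← this]
    congr 1; ext r; rw [neg_sq]; congr 2; ring

lemma Jb_nonneg {c B : ℝ} (hc : 0 < c) (hB : 0 ≤ B) : 0 ≤ Jb c B := by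
  unfold Jb; positivity

/-- bound for a symmetric pair -/
lemma G_pair {H : ℝ} (hH5 : 5 ≤ H) (δ : ℝ) {s s' : ℂ} (hs : 0 < s.re) (hs1 : s.re < 1) (hre : s'.re = 1 - s.re) (him : s'.im = s.im)
    {θ : ℝ} (hθ0 : 0 ≤ θ) (hθ : θ < Real.pi/4)
    {ε : ℝ} (hε : ε = 1 ∨ ε = -1) {B : ℝ} (hB : 0 ≤ B) (hb : -2*Real.pi*δ*ε*Real.sin θ ≤ B) :
    2 * Real.pi * (‖mellin (fun t => (etaPlus H t : ℂ) * e2pi (δ * t)) s‖ + ‖mellin (fun t => (etaPlus H t : ℂ) * e2pi (δ * t)) s'‖) ≤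
      (2.576 + 13.609 * Real.exp (-5*θ)) * Real.exp (-θ * (ε * s.im - H)) * Jb (Real.cos (2*θ)) B := by
  have h1 := G_bound1 hH5 δ hs hθ0 hθ hε
  have h2 := G_bound1 hH5 δ (s := s') (by rw [hre]; linarith) hθ0 hθ hε
  rw [him, hre] at h2
  have hc : 0 < Real.cos (2*θ) := Real.cos_pos_of_mem_Ioo ⟨by linarith [Real.pi_pos], by linarith⟩
  have h3 := J_pair hc hb hB hs.le hs1.le
  have := mul_le_mul_of_nonneg_left h3 (show 0 ≤ (2.576 + 13.609 * Real.exp (-5*θ)) * Real.exp (-θ * (ε * s.im - H)) by positivity)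
  linarith

end SGZ

set_option linter.unusedSectionVars false
namespace SGZ
open Complex DirichletCharacter
open scoped ComplexConjugate

lemma geo_sum {x a b : ℝ} (hx0 : 0 ≤ x) (hx1 : x < 1) (ha : 0 ≤ a) (hb : 0 ≤ b) (K : Finset ℕ) :
    ∑ k ∈ K, (a + b * k) * x^k ≤ a / (1-x) + b * (x/(1-x)^2) := by
  have hn : ‖x‖ < 1 := by rwa [Real.norm_eq_abs, abs_of_nonneg hx0]
  have h1 := (hasSum_geometric_of_lt_one hx0 hx1).mul_left a
  have h2 := (hasSum_coe_mul_geometric_of_norm_lt_one hn).mul_left b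
  have h3 := sum_le_hasSum K (fun k _ => by positivity) (h1.add h2)
  rw [← div_eq_mul_inv] at h3
  refine le_trans (le_of_eq ?_) h3
  apply Finset.sum_congr rfl
  intro k _
  ring

variable {q : ℕ} [NeZero q] {χ : DirichletCharacter ℂ q}

lemma L_lower {T₀ : ℝ} (hT : 105 ≤ T₀) : 2.81 ≤ Real.log (q * T₀ / (2*Real.pi)) := by
  have hq : (1:ℝ) ≤ q := by exact_mod_cast NeZero.one_le
  have hpi := Real.pi_lt_d4
  have hpi0 := Real.pi_pos
  have h1 : (16.7:ℝ) ≤ q * T₀ / (2*Real.pi) := by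
    rw [le_div_iff₀ (by positivity)]
    nlinarith
  rw [Real.le_log_iff_exp_le (by linarith)]
  refine le_trans ?_ h1
  have e3 : Real.exp 2.81 * Real.exp 0.19 = Real.exp 1 ^ 3 := by
    rw [← Real.exp_add, ← Real.exp_nat_mul]; norm_num
  have h2 := expL (x := 0.19) (by norm_num)
  have h3 : Real.exp 1 ^ 3 ≤ 20.09 := by
    have := Real.exp_one_lt_d9
    have h := pow_le_pow_left₀ (Real.exp_pos 1).le this.le 3
    norm_num at h ⊢; linarith
  have h4 : (1.209:ℝ) ≤ Real.exp 0.19 := by norm_num at h2 ⊢; linarith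
  have h5 := Real.exp_pos 2.81
  nlinarith

lemma sum_exp (hχ : χ.IsPrimitive) {T₀ θ ε : ℝ} (hT : 105 ≤ T₀) (hθ : 0 < θ) (hε : ε = 1 ∨ ε = -1)
    (Z : Finset ℂ) (hZ : ∀ ρ ∈ Z, LFunction χ ρ = 0 ∧ 0 < ρ.re ∧ ρ.re < 1 ∧ T₀ < ε * ρ.im)
    (hsym : ∀ ρ ∈ Z, 1 - conj ρ ∈ Z) :
    ∑ ρ ∈ Z, Real.exp (-θ * (ε * ρ.im - T₀)) ≤
      (1.706/(1 - Real.exp (-3*θ)) + 1.37/T₀ * (Real.exp (-3*θ)/(1 - Real.exp (-3*θ))^2)) * Real.log (q * T₀ / (2*Real.pi)) := by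
  classical
  set L := Real.log (q * T₀ / (2*Real.pi)) with hL
  have hL1 : 2.81 ≤ L := L_lower hT
  have hq : (1:ℝ) ≤ q := by exact_mod_cast NeZero.one_le
  set x := Real.exp (-3*θ) with hx
  have hx0 : 0 < x := Real.exp_pos _
  have hx1 : x < 1 := by have := Real.exp_lt_exp.mpr (show -3*θ < 0 by linarith); rwa [Real.exp_zero] at this
  have hεε : ε * ε = 1 := by rcases hε with h | h <;> rw [h] <;> norm_num
  let κ : ℂ → ℕ := fun ρ => ⌊(ε * ρ.im - T₀)/3⌋₊
  have hfib : ∑ ρ ∈ Z, Real.exp (-θ * (ε * ρ.im - T₀)) = ∑ k ∈ Z.image κ, ∑ ρ ∈ Z with κ ρ = k, Real.exp (-θ * (ε * ρ.im - T₀)) :=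
    (Finset.sum_fiberwise_of_maps_to (fun ρ hρ => Finset.mem_image_of_mem κ hρ) _).symm
  rw [hfib]
  have hk : ∀ k ∈ Z.image κ, ∑ ρ ∈ Z with κ ρ = k, Real.exp (-θ * (ε * ρ.im - T₀)) ≤ (1.706 * L + 1.37/T₀ * L * k) * x^k := by
    intro k _
    set W := Z.filter (fun ρ => κ ρ = k) with hW
    set u := T₀ + 3/2 + 3 * k with hu
    have hu0 : T₀ ≤ u := by rw [hu]; have : (0:ℝ) ≤ k := Nat.cast_nonneg k; linarith
    have habs : |ε * u| = u := by
      rw [abs_mul, abs_of_nonneg (show 0 ≤ u by linarith)]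
      rcases hε with h | h <;> rw [h] <;> simp
    have hwin : ∀ ρ ∈ W, T₀ + 3 * k ≤ ε * ρ.im ∧ ε * ρ.im ≤ T₀ + 3 * k + 3 := by
      intro ρ hρ
      rw [hW, Finset.mem_filter] at hρ
      obtain ⟨h1, h2⟩ := hρ
      have hpos : 0 ≤ (ε * ρ.im - T₀)/3 := by have := (hZ ρ h1).2.2.2; linarith
      have h3 := Nat.floor_le hpos
      have h4 := Nat.lt_floor_add_one ((ε * ρ.im - T₀)/3)
      change ⌊(ε * ρ.im - T₀)/3⌋₊ = k at h2
      rw [h2] at h3 h4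
      constructor <;> linarith
    have hcb := count_bound (χ := χ) hχ (T := ε * u) (by rw [habs]; linarith) W (by
      intro ρ hρ
      have hw := hwin ρ hρ
      have hρZ := (Finset.mem_filter.mp hρ).1
      obtain ⟨a, b, c, _⟩ := hZ ρ hρZ
      refine ⟨a, b, c, ?_⟩
      have e : |ρ.im - ε * u| = |ε * ρ.im - u| := by
        have : ε * (ρ.im - ε * u) = ε * ρ.im - u := by linear_combination (-u) * hεε
        rw [← this, abs_mul]
        rcases hε with h | h <;> rw [h] <;> simp
      rw [e, abs_le, hu]; constructor <;> linarith [hw.1, hw.2]) (by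
      intro ρ hρ
      rw [hW, Finset.mem_filter] at hρ ⊢
      refine ⟨hsym ρ hρ.1, ?_⟩
      have : (1 - conj ρ).im = ρ.im := by simp
      rw [← hρ.2]
      simp only [κ, this])
    rw [habs] at hcb
    have hlog : Real.log (q * u / (2*Real.pi)) ≤ L + (3/2 + 3 * k) / T₀ := by
      have e : (q * u / (2*Real.pi) : ℝ) = (q * T₀ / (2*Real.pi)) * (u / T₀) := by
        have : T₀ ≠ 0 := by linarith
        field_simp
      have hq0 : 0 < (q:ℝ) := by linarith
      have hT0 : 0 < T₀ := by linarith
      have hu1 : 0 < u := by linarith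
      rw [e, Real.log_mul (by positivity) (by positivity)]
      have := Real.log_le_sub_one_of_pos (show 0 < u / T₀ by positivity)
      have e2 : u / T₀ - 1 = (3/2 + 3 * k) / T₀ := by rw [hu]; field_simp; ring
      linarith
    have hdiv : (3/2 + 3 * (k:ℝ)) / T₀ ≤ (3/2) / 105 + 3 * (k * T₀⁻¹) := by
      have : (3/2 : ℝ) / T₀ ≤ (3/2) / 105 := by gcongr
      have e : (3/2 + 3 * (k:ℝ)) / T₀ = (3/2) / T₀ + 3 * (k * T₀⁻¹) := by ring
      rw [e]; linarith
    have hcard : (W.card : ℝ) ≤ 1.706 * L + 1.37/T₀ * L * k := by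
      have hk0 : (0:ℝ) ≤ k := Nat.cast_nonneg k
      have hT0 : 0 < T₀ := by linarith
      have : 2.81 * ((k:ℝ) * T₀⁻¹) ≤ L * (k * T₀⁻¹) := by gcongr
      have hkT : 0 ≤ (k:ℝ) * T₀⁻¹ := by positivity
      rw [show 1.37/T₀ * L * k = 1.37 * (L * (k * T₀⁻¹)) by ring]
      norm_num at hcb hL1 this hdiv ⊢
      linarith
    calc ∑ ρ ∈ W, Real.exp (-θ * (ε * ρ.im - T₀)) ≤ ∑ ρ ∈ W, x^k := by
          apply Finset.sum_le_sum
          intro ρ hρ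
          rw [hx, ← Real.exp_nat_mul]
          apply Real.exp_le_exp.mpr
          nlinarith [(hwin ρ hρ).1]
      _ = W.card * x^k := by rw [Finset.sum_const, nsmul_eq_mul]
      _ ≤ _ := by gcongr
  refine (Finset.sum_le_sum hk).trans ?_
  have hb0 : 0 ≤ 1.37/T₀ * L := by
    have : 0 < T₀ := by linarith
    positivity
  refine (geo_sum hx0.le hx1 (by positivity) hb0 _).trans (le_of_eq ?_)
  ring

lemma sum_side (hχ : χ.IsPrimitive) {H T₀ θ ε δ B : ℝ} (hH5 : 5 ≤ H) (hT : 105 ≤ T₀) (hθ : 0 < θ) (hθ4 : θ < Real.pi/4)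
    (hε : ε = 1 ∨ ε = -1) (hB : 0 ≤ B) (hb : -2*Real.pi*δ*ε*Real.sin θ ≤ B)
    (Z : Finset ℂ) (hZ : ∀ ρ ∈ Z, LFunction χ ρ = 0 ∧ 0 < ρ.re ∧ ρ.re < 1 ∧ T₀ < ε * ρ.im)
    (hsym : ∀ ρ ∈ Z, 1 - conj ρ ∈ Z) :
    4 * Real.pi * ∑ ρ ∈ Z, ‖mellin (fun t => (etaPlus H t : ℂ) * e2pi (δ * t)) ρ‖ ≤
      (2.576 + 13.609 * Real.exp (-5*θ)) * Real.exp (-θ * (T₀ - H)) * Jb (Real.cos (2*θ)) B *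
      ((1.706/(1 - Real.exp (-3*θ)) + 1.37/T₀ * (Real.exp (-3*θ)/(1 - Real.exp (-3*θ))^2)) * Real.log (q * T₀ / (2*Real.pi))) := by
  set g : ℂ → ℝ := fun ρ => ‖mellin (fun t => (etaPlus H t : ℂ) * e2pi (δ * t)) ρ‖ with hg
  have hinv : ∑ ρ ∈ Z, g ρ = ∑ ρ ∈ Z, g (1 - conj ρ) := by
    apply Finset.sum_nbij' (fun ρ => 1 - conj ρ) (fun ρ => 1 - conj ρ) hsym hsym
    · intro ρ _; simp
    · intro ρ _; simp
    · intro ρ _; simp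
  have hc : 0 < Real.cos (2*θ) := Real.cos_pos_of_mem_Ioo ⟨by linarith [Real.pi_pos], by linarith⟩
  have hJ := Jb_nonneg hc hB
  calc 4 * Real.pi * ∑ ρ ∈ Z, g ρ = ∑ ρ ∈ Z, 2 * Real.pi * (g ρ + g (1 - conj ρ)) := by
        rw [← Finset.mul_sum, Finset.sum_add_distrib, ← hinv]; ring
    _ ≤ ∑ ρ ∈ Z, ((2.576 + 13.609 * Real.exp (-5*θ)) * Real.exp (-θ * (T₀ - H)) * Jb (Real.cos (2*θ)) B) * Real.exp (-θ * (ε * ρ.im - T₀)) := by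
        apply Finset.sum_le_sum
        intro ρ hρ
        obtain ⟨_, b, c, _⟩ := hZ ρ hρ
        have := G_pair hH5 δ (s := ρ) (s' := 1 - conj ρ) b c (by simp) (by simp) hθ.le hθ4 hε hB hb
        refine this.trans (le_of_eq ?_)
        have e : Real.exp (-θ * (ε * ρ.im - H)) = Real.exp (-θ * (T₀ - H)) * Real.exp (-θ * (ε * ρ.im - T₀)) := by
          rw [← Real.exp_add]; congr 1; ring
        rw [e]; ring
    _ = ((2.576 + 13.609 * Real.exp (-5*θ)) * Real.exp (-θ * (T₀ - H)) * Jb (Real.cos (2*θ)) B) * ∑ ρ ∈ Z, Real.exp (-θ * (ε * ρ.im - T₀)) := by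
        rw [Finset.mul_sum]
    _ ≤ _ := by
        apply mul_le_mul_of_nonneg_left (sum_exp hχ hT hθ hε Z hZ hsym)
        positivity

/-- the master bound -/
lemma total_bound (hχ : χ.IsPrimitive) {H T₀ θ δ : ℝ} (hH5 : 5 ≤ H) (hT : 105 ≤ T₀) (hθ : 0 < θ) (hθ4 : θ < Real.pi/4) :
    4 * Real.pi * (∑' ρ : {ρ : ℂ // χ.LFunction ρ = 0 ∧ 0 < ρ.re ∧ ρ.re < 1 ∧ T₀ < |ρ.im|},
        ‖mellin (fun t => (etaPlus H t : ℂ) * e2pi (δ * t)) ρ‖) ≤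
      (2.576 + 13.609 * Real.exp (-5*θ)) * Real.exp (-θ * (T₀ - H)) * (Jb (Real.cos (2*θ)) (2*Real.pi*|δ| * Real.sin θ) + Jb (Real.cos (2*θ)) 0) *
      ((1.706/(1 - Real.exp (-3*θ)) + 1.37/T₀ * (Real.exp (-3*θ)/(1 - Real.exp (-3*θ))^2)) * Real.log (q * T₀ / (2*Real.pi))) := by
  classical
  have hpi := Real.pi_pos
  set R := (2.576 + 13.609 * Real.exp (-5*θ)) * Real.exp (-θ * (T₀ - H)) * (Jb (Real.cos (2*θ)) (2*Real.pi*|δ| * Real.sin θ) + Jb (Real.cos (2*θ)) 0) *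
      ((1.706/(1 - Real.exp (-3*θ)) + 1.37/T₀ * (Real.exp (-3*θ)/(1 - Real.exp (-3*θ))^2)) * Real.log (q * T₀ / (2*Real.pi))) with hR
  have hsin : 0 ≤ Real.sin θ := Real.sin_nonneg_of_nonneg_of_le_pi hθ.le (by linarith)
  have hB1 : 0 ≤ 2*Real.pi*|δ| * Real.sin θ := by positivity
  rw [mul_comm, ← le_div_iff₀ (by positivity)]
  set g : ℂ → ℝ := fun ρ => ‖mellin (fun t => (etaPlus H t : ℂ) * e2pi (δ * t)) ρ‖ with hg
  apply Real.tsum_le_of_sum_le (fun ρ => norm_nonneg _)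
  intro s
  rw [le_div_iff₀ (by positivity), mul_comm]
  let Z0 : Finset ℂ := s.image Subtype.val
  let Z1 : Finset ℂ := Z0 ∪ Z0.image (fun ρ => 1 - conj ρ)
  have hZ0 : ∀ ρ ∈ Z0, LFunction χ ρ = 0 ∧ 0 < ρ.re ∧ ρ.re < 1 ∧ T₀ < |ρ.im| := by
    intro ρ hρ
    obtain ⟨σ, _, rfl⟩ := Finset.mem_image.mp hρ
    exact σ.2
  have hZ1 : ∀ ρ ∈ Z1, LFunction χ ρ = 0 ∧ 0 < ρ.re ∧ ρ.re < 1 ∧ T₀ < |ρ.im| := by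
    intro ρ hρ
    rcases Finset.mem_union.mp hρ with h | h
    · exact hZ0 ρ h
    · obtain ⟨σ, h1, rfl⟩ := Finset.mem_image.mp h
      obtain ⟨a, b, c, d⟩ := hZ0 σ h1
      exact ⟨zero_symm hχ a b c, by simpa using c, by simpa using b, by simpa using d⟩
  have hs1 : ∀ ρ ∈ Z1, 1 - conj ρ ∈ Z1 := by
    intro ρ hρ
    rcases Finset.mem_union.mp hρ with h | h
    · exact Finset.mem_union_right _ (Finset.mem_image_of_mem _ h)
    · obtain ⟨σ, h1, rfl⟩ := Finset.mem_image.mp h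
      apply Finset.mem_union_left
      simpa using h1
  have hle : ∑ ρ ∈ s, g ρ ≤ ∑ ρ ∈ Z1, g ρ := by
    rw [show ∑ ρ ∈ s, g ρ = ∑ ρ ∈ Z0, g ρ from (Finset.sum_image (fun a _ b _ h => Subtype.ext h)).symm]
    exact Finset.sum_le_sum_of_subset_of_nonneg Finset.subset_union_left (fun _ _ _ => norm_nonneg _)
  have hsplit : ∑ ρ ∈ Z1, g ρ = ∑ ρ ∈ Z1 with 0 < ρ.im, g ρ + ∑ ρ ∈ Z1 with ¬ 0 < ρ.im, g ρ :=
    (Finset.sum_filter_add_sum_filter_not _ _ _).symm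
  have side : ∀ (ε : ℝ) (B : ℝ) (hε : ε = 1 ∨ ε = -1) (hB : 0 ≤ B) (hb : -2*Real.pi*δ*ε*Real.sin θ ≤ B) (p : ℂ → Prop)
      (hp : ∀ ρ, p ρ → ε * ρ.im = |ρ.im|) (hps : ∀ ρ, p ρ → p (1 - conj ρ)), 
      4 * Real.pi * ∑ ρ ∈ Z1 with p ρ, g ρ ≤ (2.576 + 13.609 * Real.exp (-5*θ)) * Real.exp (-θ * (T₀ - H)) * Jb (Real.cos (2*θ)) B *
      ((1.706/(1 - Real.exp (-3*θ)) + 1.37/T₀ * (Real.exp (-3*θ)/(1 - Real.exp (-3*θ))^2)) * Real.log (q * T₀ / (2*Real.pi))) := by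
    intro ε B hε hB hb p hp hps
    apply sum_side hχ hH5 hT hθ hθ4 hε hB hb
    · intro ρ hρ
      rw [Finset.mem_filter] at hρ
      obtain ⟨a, b, c, d⟩ := hZ1 ρ hρ.1
      exact ⟨a, b, c, by rw [hp ρ hρ.2]; exact d⟩
    · intro ρ hρ
      rw [Finset.mem_filter] at hρ ⊢
      exact ⟨hs1 ρ hρ.1, hps ρ hρ.2⟩
  have sp := fun B hB hb => side 1 B (Or.inl rfl) hB hb (fun ρ => 0 < ρ.im) (fun ρ h => by rw [one_mul, abs_of_pos h]) (fun ρ h => by simpa using h)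
  have sn := fun B hB hb => side (-1) B (Or.inr rfl) hB hb (fun ρ => ¬ 0 < ρ.im) (fun ρ h => by rw [abs_of_nonpos (not_lt.mp h)]; ring) (fun ρ h => by simpa using h)
  have hfin : 4 * Real.pi * ∑ ρ ∈ Z1, g ρ ≤ R := by
    rw [hsplit, mul_add, hR]
    rcases le_total 0 δ with hd | hd
    · have a := sp 0 le_rfl (by have : 0 ≤ Real.pi * δ * Real.sin θ := by positivity
                                linarith)
      have b := sn (2*Real.pi*|δ| * Real.sin θ) hB1 (by rw [abs_of_nonneg hd]; linarith)
      refine le_trans (le_of_eq ?_) ((add_le_add a b).trans (le_of_eq ?_))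
      · congr!
      · rw [← add_mul, ← mul_add, add_comm (Jb _ 0)]
    · have a := sp (2*Real.pi*|δ| * Real.sin θ) hB1 (by rw [abs_of_nonpos hd]; linarith)
      have b := sn 0 le_rfl (by have : 0 ≤ Real.pi * (-δ) * Real.sin θ := by have := neg_nonneg.mpr hd; positivity
                                linarith)
      refine le_trans (le_of_eq ?_) ((add_le_add a b).trans (le_of_eq ?_))
      · congr!
      · rw [← add_mul, ← mul_add]
  refine le_trans ?_ hfin
  gcongr

end SGZ

set_option linter.unusedSectionVars false
namespace SGZ
open Complex DirichletCharacter
open scoped ComplexConjugate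

lemma nonneg_of_deriv {f f' : ℝ → ℝ} (hf : ∀ x, HasDerivAt f (f' x) x) (h0 : f 0 = 0)
    (h' : ∀ x, 0 ≤ x → 0 ≤ f' x) {x : ℝ} (hx : 0 ≤ x) : 0 ≤ f x := by
  have hm : MonotoneOn f (Set.Ici 0) := by
    apply monotoneOn_of_deriv_nonneg (convex_Ici 0)
    · exact fun x _ => (hf x).continuousAt.continuousWithinAt
    · exact fun x _ => (hf x).differentiableAt.differentiableWithinAt
    · intro x hx'
      rw [interior_Ici] at hx'
      rw [(hf x).deriv]; exact h' x (le_of_lt hx')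
  have := hm (Set.mem_Ici.mpr le_rfl) (Set.mem_Ici.mpr hx) hx
  rwa [h0] at this

lemma cos_lower {x : ℝ} (hx : 0 ≤ x) : 1 - x^2/2 + x^4/24 - x^6/720 ≤ Real.cos x := by
  have pw : ∀ (n : ℕ) (x : ℝ), HasDerivAt (fun x : ℝ => x^n) (n * x^(n-1)) x := fun n x => hasDerivAt_pow n x
  have s3 : ∀ x : ℝ, 0 ≤ x → 0 ≤ Real.sin x - (x - x^3/6) := fun x hx => by
    refine nonneg_of_deriv (f := fun x => Real.sin x - (x - x^3/6)) (f' := fun x => Real.cos x - (1 - x^2/2)) (fun x => ?_) (by simp) (fun x _ => ?_) hx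
    · refine ((Real.hasDerivAt_sin x).sub ((hasDerivAt_id x).sub ((pw 3 x).div_const 6))).congr_deriv ?_
      norm_num; ring
    · have := @Real.one_sub_sq_div_two_le_cos x; linarith
  have c4 : ∀ x : ℝ, 0 ≤ x → 0 ≤ (1 - x^2/2 + x^4/24) - Real.cos x := fun x hx => by
    refine nonneg_of_deriv (f := fun x => (1 - x^2/2 + x^4/24) - Real.cos x) (f' := fun x => Real.sin x - (x - x^3/6)) (fun x => ?_) (by simp) s3 hx
    refine (((((pw 2 x).div_const 2).const_sub 1).add ((pw 4 x).div_const 24)).sub (Real.hasDerivAt_cos x)).congr_deriv ?_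
    norm_num; ring
  have s5 : ∀ x : ℝ, 0 ≤ x → 0 ≤ (x - x^3/6 + x^5/120) - Real.sin x := fun x hx => by
    refine nonneg_of_deriv (f := fun x => (x - x^3/6 + x^5/120) - Real.sin x) (f' := fun x => (1 - x^2/2 + x^4/24) - Real.cos x) (fun x => ?_) (by simp) c4 hx
    refine ((((hasDerivAt_id x).sub ((pw 3 x).div_const 6)).add ((pw 5 x).div_const 120)).sub (Real.hasDerivAt_sin x)).congr_deriv ?_
    norm_num; ring
  have c6 : 0 ≤ Real.cos x - (1 - x^2/2 + x^4/24 - x^6/720) := by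
    refine nonneg_of_deriv (f := fun x => Real.cos x - (1 - x^2/2 + x^4/24 - x^6/720)) (f' := fun x => (x - x^3/6 + x^5/120) - Real.sin x) (fun x => ?_) (by simp) s5 hx
    refine ((Real.hasDerivAt_cos x).sub (((((pw 2 x).div_const 2).const_sub 1).add ((pw 4 x).div_const 24)).sub ((pw 6 x).div_const 720))).congr_deriv ?_
    norm_num; ring
  linarith

lemma exp_neg_le {x m : ℝ} (h0 : 0 ≤ x) (hm : 0 < m) (h : 1 ≤ m * (1 + x + x^2/2 + x^3/6 + x^4/24 + x^5/120)) : Real.exp (-x) ≤ m := by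
  have := expL h0
  have h1 : 1 ≤ m * Real.exp x := h.trans (by gcongr)
  rw [Real.exp_neg, inv_eq_one_div, div_le_iff₀ (Real.exp_pos _)]
  exact h1

lemma cos_ge {θ b m : ℝ} (h0 : 0 ≤ θ) (hb : θ ≤ b) (hb1 : b ≤ 1) (h : m ≤ 1 - (2*b)^2/2 + (2*b)^4/24 - (2*b)^6/720) :
    m ≤ Real.cos (2*θ) := by
  have h1 : Real.cos (2*b) ≤ Real.cos (2*θ) := by
    apply Real.cos_le_cos_of_nonneg_of_le_pi (by linarith) (by linarith [Real.pi_gt_three]) (by linarith)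
  have h2 := cos_lower (x := 2*b) (by linarith)
  linarith

/-- concavity of `1 - exp (-3θ)` -/
lemma one_sub_exp_ge {θ b m M : ℝ} (h0 : 0 < θ) (hb : θ ≤ b) (hm : Real.exp (-(3*b)) ≤ m) (hM : 0 < M) (h : b ≤ M * (1 - m)) :
    θ ≤ M * (1 - Real.exp (-3*θ)) := by
  have hb0 : 0 < b := by linarith
  have hc := convexOn_exp.2 (Set.mem_univ (0:ℝ)) (Set.mem_univ (-(3*b))) 
    (show 0 ≤ 1 - θ/b by rw [sub_nonneg, div_le_one hb0]; exact hb) (show 0 ≤ θ/b by positivity) (by ring)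
  have e : (1 - θ/b) • (0:ℝ) + (θ/b) • (-(3*b)) = -3*θ := by
    simp only [smul_eq_mul]; field_simp; ring
  rw [e] at hc
  simp only [smul_eq_mul, Real.exp_zero] at hc
  have h1 : θ/b * Real.exp (-(3*b)) ≤ θ/b * m := by gcongr
  have h2 : θ/b * (1 - m) ≤ 1 - Real.exp (-3*θ) := by linarith
  calc θ = θ/b * b := by field_simp
    _ ≤ θ/b * (M * (1 - m)) := by gcongr
    _ = M * (θ/b * (1 - m)) := by ring
    _ ≤ _ := by gcongr

end SGZ

set_option linter.unusedSectionVars false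
namespace SGZ
open Complex DirichletCharacter
open scoped ComplexConjugate

lemma S_bound {θ T₀ M β : ℝ} (hθ : 0 < θ) (hM0 : 0 < M) (hM : θ ≤ M * (1 - Real.exp (-3*θ))) (hT : 1.37/T₀ ≤ β) (hβ : 0 ≤ β) :
    1.706/(1 - Real.exp (-3*θ)) + 1.37/T₀ * (Real.exp (-3*θ)/(1 - Real.exp (-3*θ))^2) ≤ 1.706 * (M/θ) + β * (M/θ)^2 := by
  have hx0 : 0 < Real.exp (-3*θ) := Real.exp_pos _
  have hx1 : 0 < 1 - Real.exp (-3*θ) := by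
    by_contra h
    have : M * (1 - Real.exp (-3*θ)) ≤ 0 := mul_nonpos_of_nonneg_of_nonpos hM0.le (not_lt.mp h)
    linarith
  have h1 : (1 - Real.exp (-3*θ))⁻¹ ≤ M/θ := by
    rw [inv_eq_one_div, div_le_div_iff₀ hx1 hθ]; linarith
  have e : 1.706/(1 - Real.exp (-3*θ)) + 1.37/T₀ * (Real.exp (-3*θ)/(1 - Real.exp (-3*θ))^2)
      = 1.706 * (1 - Real.exp (-3*θ))⁻¹ + 1.37/T₀ * (Real.exp (-3*θ) * ((1 - Real.exp (-3*θ))⁻¹)^2) := by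
    rw [inv_pow]; ring
  rw [e]
  have h2 : Real.exp (-3*θ) * ((1 - Real.exp (-3*θ))⁻¹)^2 ≤ 1 * (M/θ)^2 := by
    have : Real.exp (-3*θ) ≤ 1 := by linarith
    have h0 : 0 ≤ (1 - Real.exp (-3*θ))⁻¹ := by positivity
    gcongr
  have h3 : 1.37/T₀ * (Real.exp (-3*θ) * ((1 - Real.exp (-3*θ))⁻¹)^2) ≤ β * (1 * (M/θ)^2) := by
    apply mul_le_mul hT h2 (by positivity) hβ
  linarith

lemma sqrt_bd {c cb R : ℝ} (hcb : 0 < cb) (hc : cb ≤ c) (hR0 : 0 < R) (hR : 6.28319 ≤ R^2 * cb) : Real.sqrt (2*Real.pi/c) ≤ R := by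
  apply Real.sqrt_le_iff.mpr ⟨hR0.le, ?_⟩
  rw [div_le_iff₀ (by linarith)]
  have := Real.pi_lt_d6
  have : R^2 * cb ≤ R^2 * c := by gcongr
  linarith

lemma core2 {θ y T₀ cb M Φa K γ R N : ℝ} (hθ : 0 < θ) (hy : 12.566 ≤ y) (hT : 0.1883 * y^2/θ ≤ T₀)
    (hcb : 0 < cb) (hc : cb ≤ Real.cos (2*θ)) (hM0 : 0 < M) (hM : θ ≤ M * (1 - Real.exp (-3*θ)))
    (hΦ : 2.576 + 13.609 * Real.exp (-5*θ) ≤ Φa) (hK : Real.sin θ^2 ≤ K * θ^2 * Real.cos (2*θ)) (hs : Real.sin θ ≤ θ) (hs0 : 0 ≤ Real.sin θ)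
    (hγ : Real.exp (-((0.0818 - 2*0.1883^2 * K)*y^2)) ≤ γ) (hR0 : 0 < R) (hR : 6.28319 ≤ R^2 * cb)
    (hN : 0.001 * (2/cb+R)/12.566 + (1/12.566 + 0.3766/cb) * R * γ ≤ N)
    (hfin : Φa * N * (1.706 * M + 0.0462 * M^2) ≤ 8.5) :
    (2.576 + 13.609 * Real.exp (-5*θ)) * Real.exp (-(0.1883*y^2)) * (Jb (Real.cos (2*θ)) (2*0.1883*y*(Real.sin θ/θ)) + Jb (Real.cos (2*θ)) 0)
      * (1.706/(1 - Real.exp (-3*θ)) + 1.37/T₀ * (Real.exp (-3*θ)/(1 - Real.exp (-3*θ))^2))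
      ≤ 8.5 * y/θ * Real.exp (-(0.1065*y^2)) := by
  set c := Real.cos (2*θ) with hcd
  have hc0 : 0 < c := by linarith
  have hy0 : 0 < y := by linarith
  have hy2 : 157.9 ≤ y^2 := by nlinarith
  have hT0 : 0 < T₀ := lt_of_lt_of_le (by positivity) hT
  have hβ : 1.37/T₀ ≤ 0.0462 * θ := by
    rw [div_le_iff₀ hT0]
    rw [div_le_iff₀ hθ] at hT
    nlinarith
  have hS := S_bound hθ hM0 hM hβ (by positivity)
  have eS : 1.706 * (M/θ) + 0.0462 * θ * (M/θ)^2 = (1.706 * M + 0.0462 * M^2)/θ := by field_simp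
  rw [eS] at hS
  set E := Real.exp (-(0.1065*y^2)) with hE
  have hE0 : 0 < E := Real.exp_pos _
  set r := Real.sqrt (2*Real.pi/c) with hr
  have hr0 : 0 ≤ r := Real.sqrt_nonneg _
  have hrR : r ≤ R := sqrt_bd hcb hc hR0 hR
  have hγ0 : 0 < γ := lt_of_lt_of_le (Real.exp_pos _) hγ
  set b := 2*0.1883*y*(Real.sin θ/θ) with hb
  have hb0 : 0 ≤ b := by positivity
  have hb1 : b ≤ 0.3766 * y := by
    have : Real.sin θ/θ ≤ 1 := by rw [div_le_one hθ]; exact hs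
    calc b ≤ 2*0.1883*y*1 := by rw [hb]; gcongr
      _ = _ := by ring
  have hb2 : b^2/(2*c) ≤ 2*0.1883^2*K*y^2 := by
    rw [div_le_iff₀ (by positivity), hb]
    have : (Real.sin θ/θ)^2 ≤ K * c := by
      rw [div_pow, div_le_iff₀ (by positivity)]; linarith
    calc (2*0.1883*y*(Real.sin θ/θ))^2 = 4*0.1883^2*y^2*(Real.sin θ/θ)^2 := by ring
      _ ≤ 4*0.1883^2*y^2*(K * c) := by gcongr
      _ = _ := by ring
  have hx1 : Real.exp (-(0.1883*y^2)) ≤ E * 0.001 := by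
    have e1 : Real.exp (-(0.1883*y^2)) = E * Real.exp (-(0.0818*y^2)) := by
      rw [hE, ← Real.exp_add]; congr 1; ring
    rw [e1]
    gcongr
    calc Real.exp (-(0.0818*y^2)) ≤ Real.exp (-12) := by apply Real.exp_le_exp.mpr; linarith
      _ ≤ 0.001 := exp_neg_le (by norm_num) (by norm_num) (by norm_num)
  have hx2 : Real.exp (-(0.1883*y^2)) * Real.exp (b^2/(2*c)) ≤ E * γ := by
    calc Real.exp (-(0.1883*y^2)) * Real.exp (b^2/(2*c)) ≤ E * Real.exp (-((0.0818 - 2*0.1883^2 * K)*y^2)) := by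
          rw [hE, ← Real.exp_add, ← Real.exp_add]; apply Real.exp_le_exp.mpr; linarith
      _ ≤ _ := by gcongr
  have hci : 1/c ≤ 1/cb := by gcongr
  have hBr : Real.exp (-(0.1883*y^2)) * (Jb c b + Jb c 0) ≤ E * y * N := by
    have e : Real.exp (-(0.1883*y^2)) * (Jb c b + Jb c 0) = Real.exp (-(0.1883*y^2)) * (2*(1/c) + r)
        + (1 + b*(1/c)) * r * (Real.exp (-(0.1883*y^2)) * Real.exp (b^2/(2*c))) := by
      unfold Jb; rw [← hr]; simp; ring
    rw [e]
    calc _ ≤ E * 0.001 * (2*(1/cb) + R) + (1 + 0.3766 * y * (1/cb)) * R * (E * γ) := by gcongr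
      _ = E * (0.001 * (2/cb + R) * 1 + (1 + 0.3766 * y/cb) * R * γ) := by ring
      _ ≤ E * (0.001 * (2/cb + R) * (y/12.566) + (y/12.566 + 0.3766 * y/cb) * R * γ) := by
        have : 1 ≤ y/12.566 := by rw [le_div_iff₀ (by norm_num)]; linarith
        gcongr
      _ = E * y * (0.001 * (2/cb+R)/12.566 + (1/12.566 + 0.3766/cb) * R * γ) := by ring
      _ ≤ _ := by gcongr
  have hN0 : 0 ≤ N := le_trans (by positivity) hN
  have hΦ0 : 0 ≤ Φa := le_trans (by positivity) hΦ
  have hJ0 : 0 ≤ Jb c b + Jb c 0 := add_nonneg (Jb_nonneg hc0 hb0) (Jb_nonneg hc0 le_rfl)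
  calc _ = (2.576 + 13.609 * Real.exp (-5*θ)) * (Real.exp (-(0.1883*y^2)) * (Jb c b + Jb c 0))
      * (1.706/(1 - Real.exp (-3*θ)) + 1.37/T₀ * (Real.exp (-3*θ)/(1 - Real.exp (-3*θ))^2)) := by ring
    _ ≤ (2.576 + 13.609 * Real.exp (-5*θ)) * (Real.exp (-(0.1883*y^2)) * (Jb c b + Jb c 0)) * ((1.706 * M + 0.0462 * M^2)/θ) := by
      gcongr
    _ ≤ Φa * (E * y * N) * ((1.706 * M + 0.0462 * M^2)/θ) := by gcongr
    _ = (Φa * N * (1.706 * M + 0.0462 * M^2)) * (y/θ * E) := by ring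
    _ ≤ 8.5 * (y/θ * E) := by gcongr
    _ = _ := by ring

lemma case2 {θ y T₀ : ℝ} (hθ : 0 < θ) (hθ1 : θ ≤ 0.28245) (hy : 12.566 ≤ y) (hT : 0.1883 * y^2/θ ≤ T₀) :
    (2.576 + 13.609 * Real.exp (-5*θ)) * Real.exp (-(0.1883*y^2)) * (Jb (Real.cos (2*θ)) (2*0.1883*y*(Real.sin θ/θ)) + Jb (Real.cos (2*θ)) 0)
      * (1.706/(1 - Real.exp (-3*θ)) + 1.37/T₀ * (Real.exp (-3*θ)/(1 - Real.exp (-3*θ))^2))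
      ≤ 8.5 * y/θ * Real.exp (-(0.1065*y^2)) := by
  have hs : Real.sin θ ≤ θ := Real.sin_le hθ.le
  have hs0 : 0 ≤ Real.sin θ := Real.sin_nonneg_of_nonneg_of_le_pi hθ.le (by linarith [Real.pi_gt_three])
  have hy2 : 157.9 ≤ y^2 := by nlinarith
  have hK : Real.sin θ^2 ≤ 1.1535 * θ^2 * Real.cos (2*θ) := by
    have h1 := cos_lower (x := 2*θ) (by linarith)
    have h2 : Real.sin θ^2 = (1 - Real.cos (2*θ))/2 := by
      have := Real.cos_sq_add_sin_sq θ
      rw [Real.cos_two_mul]; linarith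
    have ht : θ^2 ≤ 0.07978 := by nlinarith
    have ht0 : 0 < θ^2 := by positivity
    have h3 : 1 ≤ (1 - (2*θ)^2/2 + (2*θ)^4/24 - (2*θ)^6/720) * (1 + 2*1.1535*θ^2) := by
      generalize ht' : θ^2 = t at *
      have e4 : θ^4 = t^2 := by rw [← ht']; ring
      have e6 : θ^6 = t^3 := by rw [← ht']; ring
      have e : (1 - (2*θ)^2/2 + (2*θ)^4/24 - (2*θ)^6/720) * (1 + 2*1.1535*θ^2) - 1 = t * (0.307 - (2*2.307 - 2/3) * t + (2.307*2/3 - 4/45) * t^2 - 2.307*4/45 * t^3) := by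
        rw [← ht']; ring
      have : 0 ≤ t * (0.307 - (2*2.307 - 2/3) * t + (2.307*2/3 - 4/45) * t^2 - 2.307*4/45 * t^3) := by
        apply mul_nonneg ht0.le
        nlinarith [mul_nonneg ht0.le (sub_nonneg.mpr ht), mul_nonneg (mul_nonneg ht0.le ht0.le) (sub_nonneg.mpr ht), sq_nonneg (t - 0.07978)]
      rw [ht'] at e
      linarith
    have h4 : (1 - (2*θ)^2/2 + (2*θ)^4/24 - (2*θ)^6/720) * (1 + 2*1.1535*θ^2) ≤ Real.cos (2*θ) * (1 + 2*1.1535*θ^2) := by gcongr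
    rw [h2]; linarith
  have hγ : Real.exp (-((0.0818 - 2*0.1883^2 * 1.1535)*y^2)) ≤ 1 := by
    rw [Real.exp_le_one_iff]; nlinarith
  rcases le_total θ 0.2 with h | h
  · have hc := cos_ge (m := 0.921) hθ.le h (by norm_num) (by norm_num)
    have hM := one_sub_exp_ge (m := 0.54885) (M := 0.4435) hθ h (exp_neg_le (by norm_num) (by norm_num) (by norm_num)) (by norm_num) (by norm_num)
    refine core2 (K := 1.0858) (γ := 0.5) (R := 2.612) (N := 0.6386) (Φa := 16.185) hθ hy hT (by norm_num) hc (by norm_num) hM ?_ ?_ hs hs0 ?_ (by norm_num) (by norm_num) (by norm_num) (by norm_num)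
    · have : Real.exp (-5*θ) ≤ 1 := Real.exp_le_one_iff.mpr (by linarith)
      linarith
    · calc Real.sin θ^2 ≤ θ^2 * 1 := by rw [mul_one]; gcongr
        _ ≤ θ^2 * (1.0858 * Real.cos (2*θ)) := by gcongr; linarith
        _ = _ := by ring
    · calc _ ≤ Real.exp (-0.75) := Real.exp_le_exp.mpr (by nlinarith)
        _ ≤ _ := exp_neg_le (by norm_num) (by norm_num) (by norm_num)
  · rcases le_total θ 0.24 with h' | h'
    · have hc := cos_ge (m := 0.8869) hθ.le h' (by norm_num) (by norm_num)
      have hM := one_sub_exp_ge (m := 0.4869) (M := 0.4678) hθ h' (exp_neg_le (by norm_num) (by norm_num) (by norm_num)) (by norm_num) (by norm_num)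
      refine core2 (K := 1.1535) (γ := 1) (R := 2.662) (N := 1.345) (Φa := 7.585) hθ hy hT (by norm_num) hc (by norm_num) hM ?_ hK hs hs0 hγ (by norm_num) (by norm_num) (by norm_num) (by norm_num)
      have : Real.exp (-5*θ) ≤ Real.exp (-1) := Real.exp_le_exp.mpr (by linarith)
      have := Real.exp_neg_one_lt_d9
      linarith
    · have hc := cos_ge (m := 0.8446) hθ.le hθ1 (by norm_num) (by norm_num)
      have hM := one_sub_exp_ge (m := 0.4287) (M := 0.4945) hθ hθ1 (exp_neg_le (by norm_num) (by norm_num) (by norm_num)) (by norm_num) (by norm_num)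
      refine core2 (K := 1.1535) (γ := 1) (R := 2.728) (N := 1.435) (Φa := 6.683) hθ hy hT (by norm_num) hc (by norm_num) hM ?_ hK hs hs0 hγ (by norm_num) (by norm_num) (by norm_num) (by norm_num)
      have : Real.exp (-5*θ) ≤ Real.exp (-1.2) := Real.exp_le_exp.mpr (by linarith)
      have : Real.exp (-1.2) ≤ 0.3017 := exp_neg_le (by norm_num) (by norm_num) (by norm_num)
      linarith

end SGZ

set_option linter.unusedSectionVars false
namespace SGZ
open Complex DirichletCharacter
open scoped ComplexConjugate

lemma case1 {X D T₀ : ℝ} (hX : 100 ≤ X) (hD : 0 ≤ D) (hXD : 1.5 * (Real.pi * D)^2 ≤ X) (hT : 105 ≤ T₀) :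
    (2.576 + 13.609 * Real.exp (-5*0.28245)) * Real.exp (-0.28245 * X) * (Jb (Real.cos (2*0.28245)) (2*Real.pi*D*Real.sin 0.28245) + Jb (Real.cos (2*0.28245)) 0)
      * (1.706/(1 - Real.exp (-3*0.28245)) + 1.37/T₀ * (Real.exp (-3*0.28245)/(1 - Real.exp (-3*0.28245))^2))
      ≤ 100 * Real.sqrt X * Real.exp (-0.1598 * X) := by
  have hc := cos_ge (θ := 0.28245) (b := 0.28245) (m := 0.84464) (by norm_num) le_rfl (by norm_num) (by norm_num)
  have hM := one_sub_exp_ge (θ := 0.28245) (b := 0.28245) (m := 0.4287) (M := 0.4945) (by norm_num) le_rfl (exp_neg_le (by norm_num) (by norm_num) (by norm_num)) (by norm_num) (by norm_num)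
  have hβ : 1.37/T₀ ≤ 0.0131 := by
    rw [div_le_iff₀ (by linarith)]; linarith
  have hS := S_bound (by norm_num) (by norm_num) hM hβ (by norm_num)
  have hsq : Real.sin 0.28245^2 = (1 - Real.cos (2*0.28245))/2 := by
    have := Real.cos_sq_add_sin_sq 0.28245
    rw [Real.cos_two_mul]; linarith
  have hs0 : 0 ≤ Real.sin 0.28245 := Real.sin_nonneg_of_nonneg_of_le_pi (by norm_num) (by linarith [Real.pi_gt_three])
  have hΦ : 2.576 + 13.609 * Real.exp (-5*0.28245) ≤ 6 := by
    have : Real.exp (-(5*0.28245)) ≤ 0.25 := exp_neg_le (by norm_num) (by norm_num) (by norm_num)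
    rw [show (-5*0.28245 : ℝ) = -(5*0.28245) by norm_num]; linarith
  set c := Real.cos (2*0.28245) with hcd
  have hc1 : c ≤ 1 := Real.cos_le_one _
  have hc0 : 0 < c := by linarith
  have hpi := Real.pi_pos
  set Y := Real.sqrt X with hY
  have hY2 : Y^2 = X := Real.sq_sqrt (by linarith)
  have hY10 : 10 ≤ Y := Real.le_sqrt_of_sq_le (by linarith)
  set b := 2*Real.pi*D*Real.sin 0.28245 with hb
  have hb0 : 0 ≤ b := by positivity
  have hbsq : b^2 ≤ (4/3) * X * (1 - c) := by
    have e : b^2 = 2 * (1 - c) * (Real.pi * D)^2 := by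
      have : b^2 = 4 * (Real.pi * D)^2 * Real.sin 0.28245^2 := by rw [hb]; ring
      rw [this, hsq]; ring
    rw [e]
    have : (1 - c) * (1.5 * (Real.pi * D)^2) ≤ (1 - c) * X := mul_le_mul_of_nonneg_left hXD (by linarith)
    linarith
  have hbY : b ≤ 0.46 * Y := by
    refine (pow_le_pow_iff_left₀ hb0 (by positivity) two_ne_zero).mp ?_
    rw [show (0.46 * Y)^2 = 0.46^2 * Y^2 by ring, hY2]
    nlinarith
  have hbe : b^2/(2*c) ≤ 0.12265 * X := by
    rw [div_le_iff₀ (by positivity)]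
    have : X * (1 - c) * (4/3) ≤ X * (0.2453 * c) := by
      rw [mul_assoc]; apply mul_le_mul_of_nonneg_left _ (by linarith); linarith
    linarith
  set E := Real.exp (-0.1598 * X) with hE
  have hE0 : 0 < E := Real.exp_pos _
  set r := Real.sqrt (2*Real.pi/c) with hr
  have hr0 : 0 ≤ r := Real.sqrt_nonneg _
  have hrR : r ≤ 2.728 := sqrt_bd (cb := 0.84464) (by norm_num) hc (by norm_num) (by norm_num)
  have hx1 : Real.exp (-0.28245 * X) ≤ E := Real.exp_le_exp.mpr (by linarith)
  have hx2 : Real.exp (-0.28245 * X) * Real.exp (b^2/(2*c)) ≤ E := by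
    rw [← Real.exp_add]; exact Real.exp_le_exp.mpr (by linarith)
  have hci : 1/c ≤ 1.2 := by rw [div_le_iff₀ hc0]; linarith
  have hci0 : 0 ≤ 1/c := by positivity
  have hBr : Real.exp (-0.28245 * X) * (Jb c b + Jb c 0) ≤ E * Y * 2.4 := by
    have e : Real.exp (-0.28245 * X) * (Jb c b + Jb c 0) = Real.exp (-0.28245 * X) * (2*(1/c) + r)
        + (1 + b*(1/c)) * r * (Real.exp (-0.28245 * X) * Real.exp (b^2/(2*c))) := by
      unfold Jb; rw [← hr]; simp; ring
    rw [e]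
    calc _ ≤ E * (2*1.2 + 2.728) + (1 + 0.46 * Y * 1.2) * 2.728 * E := by gcongr
      _ = E * ((2*1.2 + 2.728) + (1 + 0.46 * Y * 1.2) * 2.728) := by ring
      _ ≤ E * (Y * 2.4) := by gcongr; linarith
      _ = _ := by ring
  have hJ0 : 0 ≤ Jb c b + Jb c 0 := add_nonneg (Jb_nonneg hc0 hb0) (Jb_nonneg hc0 le_rfl)
  have hS2 : 1.706/(1 - Real.exp (-3*0.28245)) + 1.37/T₀ * (Real.exp (-3*0.28245)/(1 - Real.exp (-3*0.28245))^2) ≤ 3.1 :=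
    hS.trans (by norm_num)
  calc _ = (2.576 + 13.609 * Real.exp (-5*0.28245)) * (Real.exp (-0.28245 * X) * (Jb c b + Jb c 0))
      * (1.706/(1 - Real.exp (-3*0.28245)) + 1.37/T₀ * (Real.exp (-3*0.28245)/(1 - Real.exp (-3*0.28245))^2)) := by ring
    _ ≤ (2.576 + 13.609 * Real.exp (-5*0.28245)) * (Real.exp (-0.28245 * X) * (Jb c b + Jb c 0)) * 3.1 := by
      gcongr
    _ ≤ 6 * (E * Y * 2.4) * 3.1 := by gcongr
    _ ≤ _ := by nlinarith [mul_pos hE0 (show 0 < Y by linarith)]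

end SGZ

theorem sum_Gdelta_etaPlus_high_zeros_bound
    (H : ℝ) (hH5 : 5 ≤ H) (δ : ℝ)
    (q : ℕ) [NeZero q] (χ : DirichletCharacter ℂ q) (hχ : χ.IsPrimitive)
    (T₀ : ℝ) (hT₀ : H + max (4 * Real.pi^2 * |δ|) 100 ≤ T₀)
    (hGRH : ∀ ρ : ℂ, χ.LFunction ρ = 0 → 0 < ρ.re → ρ.re < 1 → |ρ.im| ≤ T₀ →
      ρ.re = 1/2) :
    (∑' ρ : {ρ : ℂ // χ.LFunction ρ = 0 ∧ 0 < ρ.re ∧ ρ.re < 1 ∧ T₀ < |ρ.im|},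
        ‖mellin (fun t => (etaPlus H t : ℂ) * e2pi (δ * t)) ρ‖)
      ≤ (9.462 * Real.sqrt (T₀ - H) * Real.exp (-0.1598 * (T₀ - H))
          + 11.287 * |δ| * Real.exp (-0.1065 * ((T₀ - H) / (Real.pi * δ))^2))
        * Real.log (q * T₀ / (2 * Real.pi)) := by
  have hpi := Real.pi_pos
  have hpi3 := Real.pi_gt_d4
  have h100 : 100 ≤ T₀ - H := by linarith [le_max_right (4 * Real.pi^2 * |δ|) 100]
  have hXδ : 4 * Real.pi^2 * |δ| ≤ T₀ - H := by linarith [le_max_left (4 * Real.pi^2 * |δ|) 100]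
  have hT : 105 ≤ T₀ := by linarith
  have hL : 0 ≤ Real.log (q * T₀ / (2 * Real.pi)) := le_trans (by norm_num) (SGZ.L_lower (q := q) hT)
  have hD := abs_nonneg δ
  set L := Real.log (q * T₀ / (2 * Real.pi)) with hLdef
  set X := T₀ - H with hX
  have e1 : 0 ≤ Real.sqrt X * Real.exp (-0.1598 * X) := by positivity
  have e2 : 0 ≤ |δ| * Real.exp (-0.1065 * (X / (Real.pi * δ))^2) := by positivity
  rw [← mul_le_mul_iff_of_pos_left (show 0 < 4 * Real.pi by positivity)]
  rcases le_or_gt (1.5 * (Real.pi * |δ|)^2) X with hcase | hcase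
  · have tb := SGZ.total_bound (χ := χ) hχ (θ := 0.28245) (δ := δ) hH5 hT (by norm_num) (by linarith)
    refine tb.trans ?_
    rw [← hLdef, ← hX, ← mul_assoc, ← mul_assoc]
    refine mul_le_mul_of_nonneg_right ?_ hL
    refine (SGZ.case1 h100 hD hcase hT).trans ?_
    nlinarith
  · have hδ : 0 < |δ| := by
      rcases hD.lt_or_eq with h | h
      · exact h
      · rw [← h] at hcase; norm_num at hcase; linarith
    have hX0 : 0 < X := by linarith
    set θ := 0.1883 * X / (Real.pi * |δ|)^2 with hθ
    set y := X / (Real.pi * |δ|) with hy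
    have hθ0 : 0 < θ := by positivity
    have hθ1 : θ ≤ 0.28245 := by
      rw [hθ, div_le_iff₀ (by positivity)]; linarith
    have hy1 : 12.566 ≤ y := by
      rw [hy, le_div_iff₀ (by positivity)]
      have : 12.566 * (Real.pi * |δ|) ≤ 4 * Real.pi * (Real.pi * |δ|) := by
        apply mul_le_mul_of_nonneg_right (by linarith) (by positivity)
      linarith
    have hyX : 0.1883 * y^2/θ = X := by rw [hy, hθ]; field_simp
    have hyδ : y / θ * 0.1883 = Real.pi * |δ| := by rw [hy, hθ]; field_simp
    have hθX : -θ * X = -(0.1883 * y^2) := by rw [← hyX]; field_simp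
    have hbb : 2 * Real.pi * |δ| * Real.sin θ = 2*0.1883*y*(Real.sin θ/θ) := by
      have : 2 * Real.pi * |δ| * Real.sin θ = 2 * (Real.pi * |δ|) * Real.sin θ := by ring
      rw [this, ← hyδ]; ring
    have hyy : -0.1065 * (X / (Real.pi * δ))^2 = -(0.1065*y^2) := by
      rw [hy, div_pow, div_pow, mul_pow, mul_pow, sq_abs]; ring
    have tb := SGZ.total_bound (χ := χ) hχ (θ := θ) (δ := δ) hH5 hT hθ0 (by linarith)
    refine tb.trans ?_
    rw [← hLdef, ← hX, ← mul_assoc, ← mul_assoc]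
    refine mul_le_mul_of_nonneg_right ?_ hL
    rw [hbb, hθX]
    refine (SGZ.case2 hθ0 hθ1 hy1 (by rw [hyX]; linarith)).trans ?_
    rw [hyy] at e2 ⊢
    have e3 : 8.5 * y/θ * Real.exp (-(0.1065*y^2)) * 0.1883 = 8.5 * (Real.pi * (|δ| * Real.exp (-(0.1065*y^2)))) := by
      rw [← mul_assoc Real.pi, ← hyδ]; ring
    have e4 : 0 ≤ Real.pi * (|δ| * Real.exp (-(0.1065*y^2))) := by positivity
    have e5 : 0 ≤ Real.pi * (Real.sqrt X * Real.exp (-0.1598 * X)) := by positivity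
    nlinarith
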